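/- Let q be an even prime power with q > 8. Then every k-cap in PG(4, q) satisfies k < q³ − q² + 2√5·q − 8 (so m₂(4, q) < q³ − q² + 2√5·q − 8). -/

import Mathlib

open Module

/-- Points of the projective space `PG(n, q)` over the field `F` (with `q = |F|`). -/
abbrev PGPoint (F : Type*) [Field F] (n : ℕ) := Projectivization F (Fin (n + 1) → F)

/-- The set of projective points lying in the projective subspace determined by
a linear subspace `W`. -/
def ptsIn {F : Type*} [Field F] {n : ℕ} (W : Submodule F (Fin (n + 1) → F)) :
    Set (PGPoint F n) := {P | P.submodule ≤ W}

/-- Three points of `PG(n, q)` are collinear if they lie on a common line. -/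
def Coll3 {F : Type*} [Field F] {n : ℕ} (P₁ P₂ P₃ : PGPoint F n) : Prop :=
  Module.finrank F ↥(P₁.submodule ⊔ P₂.submodule ⊔ P₃.submodule) ≤ 2

/-- A cap (a plane arc when `n = 2`): a set of points no three of which are collinear. -/
def IsCap {F : Type*} [Field F] {n : ℕ} (K : Set (PGPoint F n)) : Prop :=
  ∀ P₁ ∈ K, ∀ P₂ ∈ K, ∀ P₃ ∈ K, P₁ ≠ P₂ → P₁ ≠ P₃ → P₂ ≠ P₃ → ¬ Coll3 P₁ P₂ P₃

/-- A complete cap: a cap that is not contained in a cap with one more point. -/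
def IsCompleteCap {F : Type*} [Field F] {n : ℕ} (K : Set (PGPoint F n)) : Prop :=
  IsCap K ∧ ∀ P ∉ K, ¬ IsCap (insert P K)

/-- A tangent line of `K`: a line (2-dimensional linear subspace) meeting `K`
in exactly one point. -/
def IsTangent {F : Type*} [Field F] {n : ℕ} (K : Set (PGPoint F n))
    (W : Submodule F (Fin (n + 1) → F)) : Prop :=
  Module.finrank F W = 2 ∧ (ptsIn W ∩ K).ncard = 1

open Module

set_option linter.unusedSectionVars false

section Part1
open Classical

variable {F V : Type*} [Field F] [Fintype F] [AddCommGroup V] [Module F V] [Finite V]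

noncomputable instance instFintypeSubmoduleCap : Fintype (Submodule F V) := Fintype.ofFinite _

/-- rank of a subspace -/
noncomputable abbrev rk (X : Submodule F V) : ℕ := Module.finrank F X

theorem rk_mono {X Y : Submodule F V} (h : X ≤ Y) : rk X ≤ rk Y := Submodule.finrank_mono h

theorem eq_of_le_rk {X Y : Submodule F V} (h : X ≤ Y) (h2 : rk Y ≤ rk X) : X = Y :=
  Submodule.eq_of_le_of_finrank_le h h2

theorem rk_sup_inf (X Y : Submodule F V) : rk (X ⊔ Y) + rk (X ⊓ Y) = rk X + rk Y :=
  Submodule.finrank_sup_add_finrank_inf_eq X Y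

theorem rk_zero {X : Submodule F V} (h : rk X = 0) : X = ⊥ := Submodule.finrank_eq_zero.mp h

theorem rk_sup_pt {X P : Submodule F V} (hP : rk P = 1) (h : ¬ P ≤ X) : rk (X ⊔ P) = rk X + 1 := by
  have h1 := rk_sup_inf X P
  have h2 : rk (X ⊓ P) ≤ rk P := rk_mono inf_le_right
  have h3 : rk (X ⊓ P) ≠ 1 := by
    intro h3
    have : X ⊓ P = P := eq_of_le_rk inf_le_right (by omega)
    exact h (this ▸ inf_le_left)
  omega

theorem pt_le_pt {P Q : Submodule F V} (hP : rk P = 1) (hQ : rk Q = 1) (h : P ≤ Q) : P = Q :=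
  eq_of_le_rk h (by omega)

theorem rk_line {P Q : Submodule F V} (hP : rk P = 1) (hQ : rk Q = 1) (h : P ≠ Q) :
    rk (P ⊔ Q) = 2 := by
  rw [rk_sup_pt hQ, hP]
  exact fun h' => h (pt_le_pt hQ hP h').symm

/-- exchange -/
theorem line_eq {P Q R : Submodule F V} (hP : rk P = 1) (hQ : rk Q = 1) (hR : rk R = 1)
    (h : R ≤ P ⊔ Q) (hne : R ≠ Q) : R ⊔ Q = P ⊔ Q := by
  apply eq_of_le_rk (sup_le h le_sup_right)
  rw [rk_line hR hQ hne]
  by_cases hPQ : P = Q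
  · subst hPQ; simp only [sup_idem]; omega
  · rw [rk_line hP hQ hPQ]

/-- covers of r inside W -/
noncomputable def cov (r W : Submodule F V) : Finset (Submodule F V) :=
  Finset.univ.filter (fun X => r ≤ X ∧ X ≤ W ∧ rk X = rk r + 1)

theorem mem_cov {r W X : Submodule F V} : X ∈ cov r W ↔ r ≤ X ∧ X ≤ W ∧ rk X = rk r + 1 := by
  simp [cov]

theorem sup_eq_of_cov {r W X P : Submodule F V} (hX : X ∈ cov r W) (hP : rk P = 1)
    (h : ¬ P ≤ r) (hPX : P ≤ X) : r ⊔ P = X := by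
  obtain ⟨h1, _, h3⟩ := mem_cov.mp hX
  exact eq_of_le_rk (sup_le h1 hPX) (by rw [rk_sup_pt hP h, h3])

theorem sup_mem_cov {r W P : Submodule F V} (hr : r ≤ W) (hP : rk P = 1)
    (h : ¬ P ≤ r) (hPW : P ≤ W) : r ⊔ P ∈ cov r W :=
  mem_cov.mpr ⟨le_sup_left, sup_le hr hPW, rk_sup_pt hP h⟩

theorem fiber_sum {r W : Submodule F V} (hr : r ≤ W) (K : Finset (Submodule F V))
    (hK : ∀ P ∈ K, rk P = 1 ∧ ¬ P ≤ r ∧ P ≤ W) :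
    ∑ X ∈ cov r W, (K.filter (· ≤ X)).card = K.card := by
  rw [Finset.card_eq_sum_card_fiberwise (f := fun P => r ⊔ P) (t := cov r W)]
  · refine Finset.sum_congr rfl fun X hX => ?_
    congr 1
    refine Finset.filter_congr fun P hP => ?_
    obtain ⟨h1, h2, h3⟩ := hK P hP
    exact ⟨fun h => sup_eq_of_cov hX h1 h2 h, fun h => h ▸ le_sup_right⟩
  · intro P hP
    obtain ⟨h1, h2, h3⟩ := hK P hP
    exact sup_mem_cov hr h1 h2 h3

theorem card_vec (X : Submodule F V) [Fintype V] :
    (Finset.univ.filter (fun v : V => v ∈ X)).card = Fintype.card F ^ rk X := by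
  rw [← Module.card_eq_pow_finrank (K := F) (V := X), Fintype.card_subtype]

theorem card_vec_diff {r X : Submodule F V} (h : r ≤ X) [Fintype V] :
    (Finset.univ.filter (fun v : V => v ∈ X ∧ v ∉ r)).card + Fintype.card F ^ rk r
      = Fintype.card F ^ rk X := by
  rw [← card_vec r, ← card_vec X, ← Finset.card_union_of_disjoint]
  · congr 1
    ext v
    simp only [Finset.mem_union, Finset.mem_filter, Finset.mem_univ, true_and]
    constructor
    · rintro (⟨h1, _⟩ | h1)
      · exact h1
      · exact h h1
    · intro h1
      by_cases h2 : v ∈ r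
      · exact Or.inr h2
      · exact Or.inl ⟨h1, h2⟩
  · rw [Finset.disjoint_left]
    intro v hv hv'
    simp only [Finset.mem_filter, Finset.mem_univ, true_and] at hv hv'
    exact hv.2 hv'

theorem card_cov_mul {r W : Submodule F V} (hr : r ≤ W) :
    (cov r W).card * (Fintype.card F ^ (rk r + 1) - Fintype.card F ^ rk r) + Fintype.card F ^ rk r
      = Fintype.card F ^ rk W := by
  haveI : Fintype V := Fintype.ofFinite V
  rw [← card_vec_diff hr]
  congr 1
  rw [Finset.card_eq_sum_card_fiberwise (f := fun v => r ⊔ Submodule.span F {v}) (t := cov r W)]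
  · rw [Finset.sum_congr rfl (g := fun X => Fintype.card F ^ (rk r + 1) - Fintype.card F ^ rk r),
      Finset.sum_const, smul_eq_mul]
    intro X hX
    obtain ⟨h1, h2, h3⟩ := mem_cov.mp hX
    have := card_vec_diff h1
    rw [h3] at this
    rw [← this, Nat.add_sub_cancel]
    congr 1
    ext v
    simp only [Finset.mem_filter, Finset.mem_univ, true_and]
    constructor
    · rintro ⟨⟨h4, h5⟩, h6⟩
      refine ⟨?_, h5⟩
      rw [← h6]
      exact (le_sup_right : _ ≤ r ⊔ _) (Submodule.mem_span_singleton_self v)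
    · rintro ⟨h4, h5⟩
      refine ⟨⟨h2 h4, h5⟩, ?_⟩
      have hv : v ≠ 0 := fun h => h5 (h ▸ r.zero_mem)
      apply sup_eq_of_cov hX (finrank_span_singleton hv)
      · simpa using h5
      · simpa using h4
  · intro v hv
    simp only [Finset.coe_filter, Finset.mem_univ, true_and, Set.mem_ofPred_eq] at hv
    have hv0 : v ≠ 0 := fun h => hv.2 (h ▸ r.zero_mem)
    apply sup_mem_cov hr (finrank_span_singleton hv0)
    · simpa using hv.2
    · simpa using hv.1

theorem card_cov {r W : Submodule F V} (hr : r ≤ W) {c : ℕ} (hc : rk W = rk r + c) :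
    (cov r W).card * (Fintype.card F - 1) + 1 = Fintype.card F ^ c := by
  have h := card_cov_mul hr
  have hq : 1 < Fintype.card F := Fintype.one_lt_card
  have hpos : 0 < Fintype.card F ^ rk r := by positivity
  apply Nat.eq_of_mul_eq_mul_right hpos
  have this : Fintype.card F ^ (rk r + 1) - Fintype.card F ^ rk r
      = (Fintype.card F - 1) * Fintype.card F ^ rk r := by
    rw [pow_succ, Nat.sub_mul, one_mul, mul_comm]
  rw [this, hc, pow_add] at h
  rw [add_mul, one_mul, mul_assoc, h, mul_comm]

theorem card_cov_two {r W : Submodule F V} (hr : r ≤ W) (hc : rk W = rk r + 2) :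
    (cov r W).card = Fintype.card F + 1 := by
  have h := card_cov hr hc
  have hq : 1 < Fintype.card F := Fintype.one_lt_card
  obtain ⟨m, hm⟩ : ∃ m, Fintype.card F = m + 2 := ⟨Fintype.card F - 2, by omega⟩
  rw [hm] at h ⊢
  apply Nat.eq_of_mul_eq_mul_right (show 0 < m + 1 by omega)
  rw [show m + 2 - 1 = m + 1 by omega] at h
  nlinarith

theorem card_cov_three {r W : Submodule F V} (hr : r ≤ W) (hc : rk W = rk r + 3) :
    (cov r W).card = Fintype.card F ^ 2 + Fintype.card F + 1 := by
  have h := card_cov hr hc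
  have hq : 1 < Fintype.card F := Fintype.one_lt_card
  obtain ⟨m, hm⟩ : ∃ m, Fintype.card F = m + 2 := ⟨Fintype.card F - 2, by omega⟩
  rw [hm] at h ⊢
  apply Nat.eq_of_mul_eq_mul_right (show 0 < m + 1 by omega)
  rw [show m + 2 - 1 = m + 1 by omega] at h
  nlinarith

theorem card_cov_four {r W : Submodule F V} (hr : r ≤ W) (hc : rk W = rk r + 4) :
    (cov r W).card = Fintype.card F ^ 3 + Fintype.card F ^ 2 + Fintype.card F + 1 := by
  have h := card_cov hr hc
  have hq : 1 < Fintype.card F := Fintype.one_lt_card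
  obtain ⟨m, hm⟩ : ∃ m, Fintype.card F = m + 2 := ⟨Fintype.card F - 2, by omega⟩
  rw [hm] at h ⊢
  apply Nat.eq_of_mul_eq_mul_right (show 0 < m + 1 by omega)
  rw [show m + 2 - 1 = m + 1 by omega] at h
  nlinarith

theorem card_cov_five {r W : Submodule F V} (hr : r ≤ W) (hc : rk W = rk r + 5) :
    (cov r W).card = Fintype.card F ^ 4 + Fintype.card F ^ 3 + Fintype.card F ^ 2
      + Fintype.card F + 1 := by
  have h := card_cov hr hc
  have hq : 1 < Fintype.card F := Fintype.one_lt_card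
  obtain ⟨m, hm⟩ : ∃ m, Fintype.card F = m + 2 := ⟨Fintype.card F - 2, by omega⟩
  rw [hm] at h ⊢
  apply Nat.eq_of_mul_eq_mul_right (show 0 < m + 1 by omega)
  rw [show m + 2 - 1 = m + 1 by omega] at h
  nlinarith

/-- caps, in terms of rank-one subspaces -/
structure SCap (K : Finset (Submodule F V)) : Prop where
  pt : ∀ P ∈ K, rk P = 1
  cap : ∀ A ∈ K, ∀ B ∈ K, ∀ C ∈ K, A ≠ B → A ≠ C → B ≠ C → ¬ C ≤ A ⊔ B

/-- the part of K inside W -/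
noncomputable def res (K : Finset (Submodule F V)) (W : Submodule F V) : Finset (Submodule F V) :=
  K.filter (· ≤ W)

/-- points of K on tangents through Q -/
noncomputable def sg (K : Finset (Submodule F V)) (Q : Submodule F V) : Finset (Submodule F V) :=
  K.filter (fun P => ∀ P' ∈ K, P' ≠ P → ¬ P' ≤ P ⊔ Q)

/-- Q lies on a secant of K -/
def OnSec (K : Finset (Submodule F V)) (Q : Submodule F V) : Prop :=
  ∃ A ∈ K, ∃ B ∈ K, A ≠ B ∧ Q ≤ A ⊔ B

/-- K is maximal as a cap in W -/
def MaxIn (K : Finset (Submodule F V)) (W : Submodule F V) : Prop :=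
  ∀ Q, rk Q = 1 → Q ≤ W → Q ∉ K → OnSec K Q

theorem mem_res {K : Finset (Submodule F V)} {W P : Submodule F V} :
    P ∈ res K W ↔ P ∈ K ∧ P ≤ W := by simp [res]

theorem res_sub (K : Finset (Submodule F V)) (W : Submodule F V) : res K W ⊆ K :=
  Finset.filter_subset _ _

theorem mem_sg {K : Finset (Submodule F V)} {Q P : Submodule F V} :
    P ∈ sg K Q ↔ P ∈ K ∧ ∀ P' ∈ K, P' ≠ P → ¬ P' ≤ P ⊔ Q := by simp [sg]

theorem SCap.mono {K L : Finset (Submodule F V)} (h : SCap K) (hL : L ⊆ K) : SCap L :=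
  ⟨fun P hP => h.pt P (hL hP),
   fun A hA B hB C hC => h.cap A (hL hA) B (hL hB) C (hL hC)⟩

theorem SCap.rs {K : Finset (Submodule F V)} (h : SCap K) (W : Submodule F V) : SCap (res K W) :=
  h.mono (res_sub K W)

theorem sg_res {K : Finset (Submodule F V)} {Q W : Submodule F V} (hQ : Q ≤ W) :
    sg (res K W) Q = res (sg K Q) W := by
  ext P
  simp only [mem_sg, mem_res]
  constructor
  · rintro ⟨⟨h1, h2⟩, h3⟩
    exact ⟨⟨h1, fun P' hP' hne hle => h3 P' ⟨hP', hle.trans (sup_le h2 hQ)⟩ hne hle⟩, h2⟩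
  · rintro ⟨⟨h1, h3⟩, h2⟩
    exact ⟨⟨h1, h2⟩, fun P' hP' hne hle => h3 P' hP'.1 hne hle⟩

theorem res_res {K : Finset (Submodule F V)} {X W : Submodule F V} (h : X ≤ W) :
    res (res K W) X = res K X := by
  ext P; simp only [mem_res]
  exact ⟨fun h' => ⟨h'.1.1, h'.2⟩, fun h' => ⟨⟨h'.1, h'.2.trans h⟩, h'.2⟩⟩

/-- if Q extends K then all of K is in sg -/
theorem sg_eq_of_not_onSec {K : Finset (Submodule F V)} (hK : SCap K) {Q : Submodule F V}
    (hQ : rk Q = 1) (hQK : Q ∉ K) (h : ¬ OnSec K Q) : sg K Q = K := by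
  ext P
  rw [mem_sg]
  refine ⟨fun h => h.1, fun hP => ⟨hP, fun P' hP' hne hle => h ⟨P, hP, P', hP', hne.symm, ?_⟩⟩⟩
  rw [sup_comm] at hle
  have := line_eq hQ (hK.pt P hP) (hK.pt P' hP') hle hne
  rw [sup_comm, this]; exact le_sup_left

theorem sg_sub (K : Finset (Submodule F V)) (Q : Submodule F V) : sg K Q ⊆ K :=
  Finset.filter_subset _ _

theorem SCap.ins {K : Finset (Submodule F V)} (hK : SCap K) {Q : Submodule F V}
    (hQ : rk Q = 1) (h : ¬ OnSec K Q) : SCap (insert Q K) := by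
  by_cases hQK : Q ∈ K
  · rwa [Finset.insert_eq_of_mem hQK]
  have key : ∀ A ∈ K, ∀ B ∈ K, A ≠ B → ¬ B ≤ A ⊔ Q := by
    have := sg_eq_of_not_onSec hK hQ hQK h
    intro A hA B hB hne
    rw [← this] at hA
    exact (mem_sg.mp hA).2 B hB hne.symm
  refine ⟨?_, ?_⟩
  · intro P hP
    rcases Finset.mem_insert.mp hP with rfl | hP
    · exact hQ
    · exact hK.pt P hP
  · intro A hA B hB C hC h1 h2 h3
    rcases Finset.mem_insert.mp hA with rfl | hA' <;> rcases Finset.mem_insert.mp hB with rfl | hB' <;>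
      rcases Finset.mem_insert.mp hC with rfl | hC'
    · exact absurd rfl h1
    · exact absurd rfl h1
    · exact absurd rfl h2
    · rw [sup_comm]; exact key B hB' C hC' h3
    · exact absurd rfl h3
    · exact key A hA' C hC' h2
    · exact fun hle => h ⟨A, hA', B, hB', h1, hle⟩
    · exact hK.cap A hA' B hB' C hC' h1 h2 h3

/-- extension to a maximal cap -/
theorem exists_max {K : Finset (Submodule F V)} (hK : SCap K) {W : Submodule F V}
    (hW : ∀ P ∈ K, P ≤ W) :
    ∃ L, SCap L ∧ K ⊆ L ∧ (∀ P ∈ L, P ≤ W) ∧ MaxIn L W := by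
  obtain ⟨L, hL, hmax⟩ := Finset.exists_max_image
    (Finset.univ.filter (fun L : Finset (Submodule F V) => SCap L ∧ K ⊆ L ∧ ∀ P ∈ L, P ≤ W))
    Finset.card ⟨K, by simpa using ⟨hK, hW⟩⟩
  simp only [Finset.mem_filter, Finset.mem_univ, true_and] at hL hmax
  refine ⟨L, hL.1, hL.2.1, hL.2.2, fun Q hQ hQW hQL => ?_⟩
  by_contra h
  have := hmax (insert Q L) ⟨hL.1.ins hQ h, hL.2.1.trans (Finset.subset_insert _ _), by
    intro P hP
    rcases Finset.mem_insert.mp hP with rfl | hP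
    · exact hQW
    · exact hL.2.2 P hP⟩
  rw [Finset.card_insert_of_notMem hQL] at this
  omega

end Part1

open Module
set_option linter.unusedSectionVars false

section Part2
open Classical Polynomial

variable {F : Type*} [Field F] [Fintype F]

theorem prod_sub_erase (x : F) : ∏ y ∈ Finset.univ.erase x, (x - y) = -1 := by
  have h := congrArg (Units.val (α := F)) (FiniteField.prod_univ_units_id_eq_neg_one (K := F))
  rw [Units.coe_prod, Units.val_neg, Units.val_one] at h
  rw [← h]
  symm
  refine Finset.prod_bij (fun (u : Fˣ) _ => x - (u : F)) ?_ ?_ ?_ ?_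
  · intro u _
    simp
  · intro u _ v _ h
    have : (u : F) = v := by simpa using h
    exact Units.ext this
  · intro y hy
    have hy' : x - y ≠ 0 := sub_ne_zero.mpr (fun h => (Finset.mem_erase.mp hy).1 h.symm)
    exact ⟨Units.mk0 _ hy', Finset.mem_univ _, by simp⟩
  · intro u _
    simp

theorem oneVar {ι : Type*} (S E : Finset ι) (c α κ : ι → F) (κ0 : F)
    (hc : ∀ z ∈ S, c z ≠ 0) (hα : Set.InjOn α S) (hE : E ⊆ S)
    (hn : Fintype.card F + 1 ≤ S.card + E.card)
    (hκ : ∀ e ∈ E, κ e * c e ^ 3 = κ0 * c e ^ (S.card + E.card)) :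
    ∃ C : F, C ≠ 0 ∧ ∑ e ∈ E, (∏ z ∈ S.erase e, (c e * c z * (α e - α z)))⁻¹ * κ e *
      ∏ u ∈ E.erase e, (c u / (c e * c u * (α e - α u))) =
      if Fintype.card F + 1 = S.card + E.card then C * κ0 else 0 := by
  set p : F[X] := ∏ y ∈ Finset.univ \ S.image α, (X - Polynomial.C y) with hp
  have hcardS : (S.image α).card = S.card := Finset.card_image_of_injOn hα
  have hSq : S.card ≤ Fintype.card F := hcardS ▸ Finset.card_le_univ _
  have hdeg : p.natDegree = Fintype.card F - S.card := by
    rw [hp, natDegree_finsetProd_X_sub_C_eq_card, Finset.card_sdiff_of_subset (Finset.subset_univ _),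
      hcardS, Finset.card_univ]
  have hmon : p.Monic := monic_prod_X_sub_C _ _
  have hα' : Set.InjOn α E := hα.mono hE
  have hlt : p.degree < E.card := by
    rw [degree_eq_natDegree hmon.ne_zero, hdeg]
    exact_mod_cast (by omega : Fintype.card F - S.card < E.card)
  have hco := Lagrange.coeff_eq_sum hα' hlt
  have hcp : ∏ z ∈ S, c z ≠ 0 := Finset.prod_ne_zero_iff.mpr hc
  refine ⟨-(∏ z ∈ S, c z)⁻¹, neg_ne_zero.mpr (inv_ne_zero hcp), ?_⟩
  have hsum : ∑ e ∈ E, (∏ z ∈ S.erase e, (c e * c z * (α e - α z)))⁻¹ * κ e *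
      ∏ u ∈ E.erase e, (c u / (c e * c u * (α e - α u))) =
      (-(∏ z ∈ S, c z)⁻¹) * κ0 * p.coeff (E.card - 1) := by
    rw [hco, Finset.mul_sum]
    refine Finset.sum_congr rfl fun e he => ?_
    have heS := hE he
    have hce := hc e heS
    have hP : (∏ z ∈ S.erase e, (α e - α z)) * p.eval (α e) = -1 := by
      rw [← prod_sub_erase (α e), hp, eval_prod]
      have h1 : ∏ z ∈ S.erase e, (α e - α z) = ∏ y ∈ (S.image α).erase (α e), (α e - y) := by
        rw [show (S.image α).erase (α e) = (S.erase e).image α by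
          ext y
          simp only [Finset.mem_erase, Finset.mem_image]
          constructor
          · rintro ⟨h, z, hz, rfl⟩
            exact ⟨z, ⟨fun h' => h (by rw [h']), hz⟩, rfl⟩
          · rintro ⟨z, ⟨h, hz⟩, rfl⟩
            exact ⟨fun h' => h (hα hz heS h'), z, hz, rfl⟩]
        rw [Finset.prod_image]
        intro x hx y hy h
        exact hα (Finset.mem_of_mem_erase hx) (Finset.mem_of_mem_erase hy) h
      rw [h1]
      simp only [eval_sub, eval_X, eval_C]
      rw [← Finset.prod_union]
      · congr 1
        ext y
        simp only [Finset.mem_union, Finset.mem_erase, Finset.mem_sdiff, Finset.mem_univ, true_and,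
          and_true]
        constructor
        · rintro (h | h)
          · exact h.1
          · exact fun h' => h (h' ▸ Finset.mem_image_of_mem _ heS)
        · intro h
          by_cases h' : y ∈ S.image α
          · exact Or.inl ⟨h, h'⟩
          · exact Or.inr h'
      · rw [Finset.disjoint_left]
        intro y hy hy'
        exact (Finset.mem_sdiff.mp hy').2 (Finset.mem_of_mem_erase hy)
    have hA : ∏ z ∈ S.erase e, (α e - α z) ≠ 0 := by
      intro h; rw [h, zero_mul] at hP
      exact one_ne_zero (neg_eq_zero.mp hP.symm)
    have hev : p.eval (α e) = -(∏ z ∈ S.erase e, (α e - α z))⁻¹ := by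
      field_simp
      linear_combination hP
    have hB : ∏ u ∈ E.erase e, (α e - α u) ≠ 0 := by
      rw [Finset.prod_ne_zero_iff]
      intro u hu
      refine sub_ne_zero.mpr fun h => (Finset.mem_erase.mp hu).1 ?_
      exact (hα heS (hE (Finset.mem_of_mem_erase hu)) h).symm
    have h2 : ∏ z ∈ S.erase e, (c e * c z * (α e - α z)) =
        c e ^ (S.card - 1) * (∏ z ∈ S.erase e, c z) * ∏ z ∈ S.erase e, (α e - α z) := by
      rw [Finset.prod_mul_distrib, Finset.prod_mul_distrib, Finset.prod_const,
        Finset.card_erase_of_mem heS]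
    have h3 : c e * ∏ z ∈ S.erase e, c z = ∏ z ∈ S, c z := Finset.mul_prod_erase S c heS
    have h4 : ∏ u ∈ E.erase e, (c u / (c e * c u * (α e - α u))) =
        (c e ^ (E.card - 1))⁻¹ * (∏ u ∈ E.erase e, (α e - α u))⁻¹ := by
      rw [← Finset.card_erase_of_mem he, ← Finset.prod_const, ← Finset.prod_inv_distrib,
        ← Finset.prod_inv_distrib, ← Finset.prod_mul_distrib]
      refine Finset.prod_congr rfl fun u hu => ?_
      have hcu := hc u (hE (Finset.mem_of_mem_erase hu))
      have : α e - α u ≠ 0 := (Finset.prod_ne_zero_iff.mp hB) u hu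
      field_simp
    have hD : ∏ z ∈ S.erase e, c z ≠ 0 := by
      intro h; rw [h, mul_zero] at h3; exact hcp h3.symm
    rw [h2, h4, hev, ← h3]
    have hk := hκ e he
    have hS1 : 1 ≤ S.card := Finset.card_pos.mpr ⟨e, heS⟩
    have hE1 : 1 ≤ E.card := Finset.card_pos.mpr ⟨e, he⟩
    obtain ⟨s, hs⟩ : ∃ s, S.card = s + 1 := ⟨S.card - 1, by omega⟩
    obtain ⟨t, ht⟩ : ∃ t, E.card = t + 1 := ⟨E.card - 1, by omega⟩
    rw [hs, ht] at hk ⊢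
    simp only [Nat.add_sub_cancel]
    have hk' : κ e * c e = κ0 * c e ^ s * c e ^ t := by
      apply mul_right_cancel₀ (pow_ne_zero 2 hce)
      linear_combination hk
    field_simp
    linear_combination hk'
  rw [hsum]
  split_ifs with h
  · have : E.card - 1 = p.natDegree := by omega
    rw [this, hmon.coeff_natDegree, mul_one]
  · rw [coeff_eq_zero_of_natDegree_lt (by omega), mul_zero]


/-- explicit three by three determinant -/
def dt (x y z : Fin 3 → F) : F :=
  x 0 * (y 1 * z 2 - y 2 * z 1) - x 1 * (y 0 * z 2 - y 2 * z 0) + x 2 * (y 0 * z 1 - y 1 * z 0)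

theorem dt_plucker (a Q y e z : Fin 3 → F) :
    dt a e z * dt a Q y = dt a Q e * dt a y z - dt a Q z * dt a y e := by
  unfold dt
  ring

theorem algLemma {ι : Type*} (h2 : (2 : F) = 0) (x : ι → Fin 3 → F) (K E : Finset ι) (Q A B : ι)
    (hA : A ∈ E) (hB : B ∈ K) (hAB : A ≠ B) (hE : E ⊆ K) (hBE : B ∉ E)
    (hcard : E.card + K.card = Fintype.card F + 4)
    (H1 : ∀ a ∈ K, ∀ b ∈ K, ∀ c ∈ K, a ≠ b → a ≠ c → b ≠ c → dt (x a) (x b) (x c) ≠ 0)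
    (H2 : ∀ a ∈ E, a ≠ A → ∀ z ∈ K, z ≠ a → dt (x a) (x Q) (x z) ≠ 0)
    (H3 : dt (x A) (x Q) (x B) = 0)
    (H4 : ∀ z ∈ K, z ≠ A → z ≠ B → dt (x A) (x Q) (x z) ≠ 0) (hE2 : 2 ≤ E.card) : False := by
  set D : ι → ι → ι → F := fun i j k => dt (x i) (x j) (x k) with hD
  have hneg : ∀ w : F, -w = w := fun w => by linear_combination (-w) * h2
  have Dswap : ∀ i j k, D j i k = D i j k := by
    intro i j k
    rw [← hneg (D i j k)]
    simp only [hD, dt]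
    ring
  have Dswap2 : ∀ i j k, D k j i = D i j k := by
    intro i j k
    rw [← hneg (D i j k)]
    simp only [hD, dt]
    ring
  have HQ : ∀ a ∈ E, ∀ z ∈ E, z ≠ a → D a Q z ≠ 0 := by
    intro a ha z hz hne
    by_cases haA : a = A
    · subst haA
      exact H4 z (hE hz) hne (fun h => hBE (h ▸ hz))
    · exact H2 a ha haA z (hE hz) hne
  set f : ι → ι → F := fun a e => (∏ z ∈ (K.erase a).erase e, D a e z)⁻¹ with hf
  set g : ι → F := fun a => ∑ e ∈ E.erase a, f a e *
    ∏ u ∈ (E.erase a).erase e, (D a Q u / D a e u) with hg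
  -- the total sum vanishes
  have hT : ∑ a ∈ E, g a * (∏ z ∈ E.erase a, D a Q z)⁻¹ = 0 := by
    have h1 : ∑ a ∈ E, g a * (∏ z ∈ E.erase a, D a Q z)⁻¹ =
        ∑ a ∈ E, ∑ e ∈ E.erase a, f a e * (∏ u ∈ (E.erase a).erase e, D a e u)⁻¹ * (D a Q e)⁻¹ := by
      refine Finset.sum_congr rfl fun a ha => ?_
      simp only [hg]
      rw [Finset.sum_mul]
      refine Finset.sum_congr rfl fun e he => ?_
      rw [← Finset.mul_prod_erase _ (fun z => D a Q z) he, Finset.prod_div_distrib]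
      have h3 : ∏ z ∈ (E.erase a).erase e, D a Q z ≠ 0 := by
        rw [Finset.prod_ne_zero_iff]
        intro z hz
        have hz' := Finset.mem_of_mem_erase hz
        exact HQ a ha z (Finset.mem_of_mem_erase hz') (Finset.ne_of_mem_erase hz')
      have h4 := HQ a ha e (Finset.mem_of_mem_erase he) (Finset.ne_of_mem_erase he)
      rw [div_eq_mul_inv, mul_inv]
      field_simp
    rw [h1]
    rw [Finset.sum_sigma']
    refine Finset.sum_involution (fun p _ => ⟨p.2, p.1⟩) ?_ ?_ ?_ ?_
    · rintro ⟨a, e⟩ _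
      simp only [hf]
      rw [Finset.erase_right_comm (s := K) (a := e), Finset.erase_right_comm (s := E) (a := e)]
      simp only [Dswap2 a Q e, Dswap a e]
      linear_combination (((∏ z ∈ (K.erase a).erase e, D a e z)⁻¹ *
        (∏ u ∈ (E.erase a).erase e, D a e u)⁻¹ * (D a Q e)⁻¹)) * h2
    · rintro ⟨a, e⟩ h _ h'
      simp only [Finset.mem_sigma, Finset.mem_erase] at h
      have := congrArg Sigma.fst h'
      exact h.2.1 this
    · rintro ⟨a, e⟩ h
      simp only [Finset.mem_sigma, Finset.mem_erase] at h ⊢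
      exact ⟨h.2.2, h.2.1.symm, h.1⟩
    · rintro ⟨a, e⟩ h
      rfl
  have hpl : ∀ a y, D a Q y ≠ 0 → ∀ e z, D a Q e ≠ 0 → D a Q z ≠ 0 →
      D a e z = D a Q e * D a Q z * (D a y e / (D a Q e * D a Q y) - D a y z / (D a Q z * D a Q y)) := by
    intro a y hy e z he hz
    have := dt_plucker (x a) (x Q) (x y) (x e) (x z)
    change D a e z * D a Q y = D a Q e * D a y z - D a Q z * D a y e at this
    field_simp
    linear_combination this + (D a Q e * D a y z - D a Q z * D a y e) * h2
  have hinj : ∀ a y, D a Q y ≠ 0 → ∀ S : Finset ι, S ⊆ K.erase a → (∀ z ∈ S, D a Q z ≠ 0) → a ∈ K →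
      Set.InjOn (fun u => D a y u / (D a Q u * D a Q y)) S := by
    intro a y hy S hS hSc ha e he z hz h
    by_contra hne
    have := hpl a y hy e z (hSc e he) (hSc z hz)
    simp only at h
    rw [h, sub_self, mul_zero] at this
    have he' := Finset.mem_erase.mp (hS he)
    have hz' := Finset.mem_erase.mp (hS hz)
    exact H1 a ha e he'.2 z hz'.2 he'.1.symm hz'.1.symm hne this
  have hEK : E.card ≤ K.card := Finset.card_le_card hE
  have hgz : ∀ a ∈ E, a ≠ A → g a = 0 := by
    intro a ha haA
    have haK := hE ha
    have hy : D a Q A ≠ 0 := HQ a ha A hA haA.symm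
    have hSc : ∀ z ∈ K.erase a, D a Q z ≠ 0 := fun z hz =>
      H2 a ha haA z (Finset.mem_of_mem_erase hz) (Finset.ne_of_mem_erase hz)
    have hn : (K.erase a).card + (E.erase a).card = Fintype.card F + 2 := by
      rw [Finset.card_erase_of_mem haK, Finset.card_erase_of_mem ha]; omega
    obtain ⟨C, _, hC⟩ := oneVar (K.erase a) (E.erase a) (fun u => D a Q u)
      (fun u => D a A u / (D a Q u * D a Q A)) (fun _ => 1) 1 hSc
      (hinj a A hy _ (Finset.Subset.refl _) hSc haK)
      (Finset.erase_subset_erase _ hE) (by omega) (by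
        intro e he
        rw [hn, pow_add, FiniteField.pow_card]; ring)
    rw [if_neg (by omega)] at hC
    rw [← hC]
    simp only [hg, hf]
    refine Finset.sum_congr rfl fun e he => ?_
    have heK := Finset.erase_subset_erase _ hE he
    congr 1
    · rw [mul_one]
      congr 1
      refine Finset.prod_congr rfl fun z hz => ?_
      exact hpl a A hy e z (hSc e heK) (hSc z (Finset.mem_of_mem_erase hz))
    · refine Finset.prod_congr rfl fun z hz => ?_
      rw [← hpl a A hy e z (hSc e heK)
        (hSc z (Finset.erase_subset_erase _ hE (Finset.mem_of_mem_erase hz)))]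
  have hgA : g A ≠ 0 := by
    have hAK := hE hA
    obtain ⟨y, hyE⟩ : (E.erase A).Nonempty := by
      rw [← Finset.card_pos, Finset.card_erase_of_mem hA]; omega
    have hy : D A Q y ≠ 0 := HQ A hA y (Finset.mem_of_mem_erase hyE) (Finset.ne_of_mem_erase hyE)
    have hBK : B ∈ K.erase A := Finset.mem_erase.mpr ⟨hAB.symm, hB⟩
    have hSc : ∀ z ∈ (K.erase A).erase B, D A Q z ≠ 0 := fun z hz => by
      have h1 := Finset.mem_erase.mp hz
      have h3 := Finset.mem_erase.mp h1.2
      exact H4 z h3.2 h3.1 h1.1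
    have hES : E.erase A ⊆ (K.erase A).erase B := by
      intro e he
      exact Finset.mem_erase.mpr ⟨fun h => hBE (h ▸ Finset.mem_of_mem_erase he),
        Finset.erase_subset_erase _ hE he⟩
    have hn : ((K.erase A).erase B).card + (E.erase A).card = Fintype.card F + 1 := by
      rw [Finset.card_erase_of_mem hBK, Finset.card_erase_of_mem hAK, Finset.card_erase_of_mem hA]
      have : 0 < (K.erase A).card := Finset.card_pos.mpr ⟨B, hBK⟩
      rw [Finset.card_erase_of_mem hAK] at this
      omega
    set β : F := D A y B / D A Q y with hβ
    have hDB : ∀ e, D A e B = D A Q e * β := by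
      intro e
      have := dt_plucker (x A) (x Q) (x y) (x e) (x B)
      rw [H3, zero_mul, sub_zero] at this
      rw [hβ, ← mul_div_assoc, eq_div_iff hy]
      exact this
    have hβ0 : β ≠ 0 := by
      intro h
      have h1 := hDB y
      rw [h, mul_zero] at h1
      exact H1 A hAK y (hE (Finset.mem_of_mem_erase hyE)) B hB (Finset.ne_of_mem_erase hyE).symm hAB
        (fun h => hBE (h ▸ Finset.mem_of_mem_erase hyE)) h1
    obtain ⟨C, hC0, hC⟩ := oneVar ((K.erase A).erase B) (E.erase A) (fun u => D A Q u)
      (fun u => D A y u / (D A Q u * D A Q y)) (fun e => (D A e B)⁻¹) β⁻¹ hSc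
      (hinj A y hy _ (Finset.erase_subset _ _) hSc hAK)
      hES (by omega) (by
        intro e he
        have hce := hSc e (hES he)
        simp only [hDB e]
        rw [hn, pow_add, FiniteField.pow_card]
        field_simp)
    rw [if_pos hn.symm] at hC
    have : g A = C * β⁻¹ := by
      rw [← hC]
      simp only [hg, hf]
      refine Finset.sum_congr rfl fun e he => ?_
      have heK := hES he
      congr 1
      · rw [← mul_inv]
        congr 1
        have hBe : B ∈ (K.erase A).erase e := Finset.mem_erase.mpr
          ⟨(Finset.ne_of_mem_erase heK).symm, hBK⟩
        rw [← Finset.mul_prod_erase _ _ hBe, mul_comm, Finset.erase_right_comm]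
        congr 1
        refine Finset.prod_congr rfl fun z hz => ?_
        exact hpl A y hy e z (hSc e heK) (hSc z (Finset.mem_of_mem_erase hz))
      · refine Finset.prod_congr rfl fun z hz => ?_
        rw [← hpl A y hy e z (hSc e heK) (hSc z (hES (Finset.mem_of_mem_erase hz)))]
    rw [this]
    exact mul_ne_zero hC0 (inv_ne_zero hβ0)
  rw [Finset.sum_eq_single A (fun a ha hne => by rw [hgz a ha hne, zero_mul])
    (fun h => absurd hA h)] at hT
  rcases mul_eq_zero.mp hT with h | h
  · exact hgA h
  · rw [inv_eq_zero, Finset.prod_eq_zero_iff] at h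
    obtain ⟨z, hz, h⟩ := h
    exact HQ A hA z (Finset.mem_of_mem_erase hz) (Finset.ne_of_mem_erase hz) h

end Part2

open Module
set_option linter.unusedSectionVars false

section Part3
open Classical

variable {F V : Type*} [Field F] [Fintype F] [AddCommGroup V] [Module F V] [Finite V]

theorem exists_coord {W : Submodule F V} (hW : rk W = 3) :
    ∃ x : Submodule F V → Fin 3 → F, ∀ P Q R, rk P = 1 → rk Q = 1 → rk R = 1 → P ≤ W → Q ≤ W →
      R ≤ W → P ≠ Q → (dt (x P) (x Q) (x R) = 0 ↔ R ≤ P ⊔ Q) := by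
  have hv : ∀ P : Submodule F V, ∃ w : W, rk P = 1 → P ≤ W → P = Submodule.span F {(w : V)} := by
    intro P
    by_cases h : rk P = 1 ∧ P ≤ W
    · obtain ⟨h1, h2⟩ := h
      obtain ⟨v, hv, hv2⟩ := finrank_eq_one_iff'.mp h1
      refine ⟨⟨v, h2 v.2⟩, fun _ _ => ?_⟩
      symm
      apply eq_of_le_rk
      · rw [Submodule.span_le]; simp
      · rw [h1]
        have : (v : V) ≠ 0 := fun h => hv (by ext; exact h)
        exact (finrank_span_singleton (K := F) this).ge
    · exact ⟨0, fun h1 h2 => absurd ⟨h1, h2⟩ h⟩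
  choose w hw using hv
  let b : Basis (Fin 3) F W := finBasisOfFinrankEq F W hW
  refine ⟨fun P => b.equivFun (w P), fun P Q R hP hQ hR hPW hQW hRW hPQ => ?_⟩
  have h1 : dt (b.equivFun (w P)) (b.equivFun (w Q)) (b.equivFun (w R)) =
      (Matrix.of (b.equivFun ∘ ![w P, w Q, w R])).det := by
    rw [Matrix.det_fin_three]
    simp only [dt, Matrix.of_apply, Function.comp, Matrix.cons_val]
    ring
  have h2 : (Matrix.of (b.equivFun ∘ ![w P, w Q, w R])).det ≠ 0 ↔
      LinearIndependent F ![(w P : V), w Q, w R] := by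
    rw [← isUnit_iff_ne_zero, ← Matrix.isUnit_iff_isUnit_det,
      ← Matrix.linearIndependent_rows_iff_isUnit]
    have e1 : (Matrix.of (b.equivFun ∘ ![w P, w Q, w R])).row =
      b.equivFun.toLinearMap ∘ ![w P, w Q, w R] := rfl
    rw [e1, LinearMap.linearIndependent_iff _ (LinearEquiv.ker _)]
    have e2 : ![(w P : V), w Q, w R] = W.subtype ∘ ![w P, w Q, w R] := by
      ext i; fin_cases i <;> rfl
    rw [e2, LinearMap.linearIndependent_iff _ (Submodule.ker_subtype W)]
  have h3 : Submodule.span F (Set.range ![(w P : V), w Q, w R]) = P ⊔ Q ⊔ R := by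
    rw [Matrix.range_cons, Matrix.range_cons, Matrix.range_cons, Matrix.range_empty,
      Set.union_empty, Submodule.span_union, Submodule.span_union, ← hw P hP hPW, ← hw Q hQ hQW,
      ← hw R hR hRW, sup_assoc]
  rw [h1]
  rw [linearIndependent_iff_card_eq_finrank_span, Set.finrank, h3, Fintype.card_fin] at h2
  have h4 : rk (P ⊔ Q) = 2 := rk_line hP hQ hPQ
  constructor
  · intro h
    by_contra hle
    exact h2.mpr (by have := rk_sup_pt hR hle; unfold rk at *; omega) h
  · intro h
    by_contra hne
    have := h2.mp hne
    rw [sup_eq_left.mpr h] at this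
    unfold rk at *; omega

/-- plane lemma -/
theorem plane_lemma (h2 : (2 : F) = 0) {W : Submodule F V} (hW : rk W = 3)
    {K : Finset (Submodule F V)} (hK : SCap K) (hKW : ∀ P ∈ K, P ≤ W) {Q : Submodule F V}
    (hQ : rk Q = 1) (hQK : Q ∉ K) (hsec : OnSec K Q) :
    (sg K Q).card + K.card ≤ Fintype.card F + 2 := by
  obtain ⟨A, hA, B, hB, hAB, hQAB⟩ := hsec
  have hQW : Q ≤ W := hQAB.trans (sup_le (hKW A hA) (hKW B hB))
  have hne : ∀ P ∈ K, P ≠ Q := fun P hP h => hQK (h ▸ hP)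
  have hBAQ : B ≤ A ⊔ Q := by
    rw [sup_comm, line_eq (hK.pt B hB) (hK.pt A hA) hQ (by rwa [sup_comm]) (hne A hA).symm]
    exact le_sup_left
  have hABQ : A ≤ B ⊔ Q := by
    rw [sup_comm, line_eq (hK.pt A hA) (hK.pt B hB) hQ hQAB (hne B hB).symm]
    exact le_sup_left
  have hAsg : A ∉ sg K Q := fun h => (mem_sg.mp h).2 B hB hAB.symm hBAQ
  have hBsg : B ∉ sg K Q := fun h => (mem_sg.mp h).2 A hA hAB hABQ
  have hsgK : (sg K Q).card + 2 ≤ K.card := by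
    have : insert A (insert B (sg K Q)) ⊆ K :=
      Finset.insert_subset hA (Finset.insert_subset hB (sg_sub K Q))
    have h := Finset.card_le_card this
    rw [Finset.card_insert_of_notMem (by simp [hAB, hAsg]), Finset.card_insert_of_notMem hBsg] at h
    omega
  by_contra hcon
  push Not at hcon
  obtain ⟨x, hx⟩ := exists_coord hW
  have H4 : ∀ z ∈ K, z ≠ A → z ≠ B → dt (x A) (x Q) (x z) ≠ 0 := by
    intro z hz hzA hzB h
    rw [hx A Q z (hK.pt A hA) hQ (hK.pt z hz) (hKW A hA) hQW (hKW z hz) (hne A hA)] at h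
    exact hK.cap A hA B hB z hz hAB hzA.symm hzB.symm
      (h.trans (sup_le le_sup_left hQAB))
  -- no arc has more than q+2 points, in the form we need: at least q+3 points leads to no sg
  have hKle : K.card ≤ Fintype.card F + 2 := by
    have hAW := hKW A hA
    have h1 : ∑ X ∈ cov A W, ((K.erase A).filter (· ≤ X)).card = (K.erase A).card := by
      apply fiber_sum hAW
      intro P hP
      have hP' := Finset.mem_erase.mp hP
      exact ⟨hK.pt P hP'.2, fun h => hP'.1 (pt_le_pt (hK.pt P hP'.2) (hK.pt A hA) h), hKW P hP'.2⟩
    have h3 : ∀ X ∈ cov A W, ((K.erase A).filter (· ≤ X)).card ≤ 1 := by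
      intro X hX
      rw [Finset.card_le_one]
      intro P hP R hR
      simp only [Finset.mem_filter, Finset.mem_erase] at hP hR
      by_contra hPR
      have hPA : ¬ P ≤ A := fun h => hP.1.1 (pt_le_pt (hK.pt P hP.1.2) (hK.pt A hA) h)
      have := sup_eq_of_cov hX (hK.pt P hP.1.2) hPA hP.2
      exact hK.cap A hA P hP.1.2 R hR.1.2 hP.1.1.symm hR.1.1.symm hPR (this ▸ hR.2)
    have h4 := Finset.sum_le_sum h3
    rw [h1, Finset.card_erase_of_mem hA, Finset.sum_const, smul_eq_mul, mul_one,
      card_cov_two hAW (by rw [hW, hK.pt A hA])] at h4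
    omega
  obtain ⟨E0, hE0, hE0c⟩ := Finset.exists_subset_card_eq
    (show Fintype.card F + 3 - K.card ≤ (sg K Q).card by omega)
  have hAE0 : A ∉ E0 := fun h => hAsg (hE0 h)
  refine algLemma h2 x K (insert A E0) Q A B (Finset.mem_insert_self _ _) hB hAB
    (Finset.insert_subset hA (hE0.trans (sg_sub K Q))) ?_ ?_ ?_ ?_ ?_ H4 ?_
  · simp only [Finset.mem_insert, not_or]
    exact ⟨hAB.symm, fun h => hBsg (hE0 h)⟩
  · rw [Finset.card_insert_of_notMem hAE0, hE0c]; omega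
  · intro a ha b hb c hc hab hac hbc
    rw [Ne, hx a b c (hK.pt a ha) (hK.pt b hb) (hK.pt c hc) (hKW a ha) (hKW b hb) (hKW c hc) hab]
    exact hK.cap a ha b hb c hc hab hac hbc
  · intro a ha haA z hz hza
    have ha' := hE0 (Finset.mem_of_mem_insert_of_ne ha haA)
    have haK := (mem_sg.mp ha').1
    rw [Ne, hx a Q z (hK.pt a haK) hQ (hK.pt z hz) (hKW a haK) hQW (hKW z hz) (hne a haK)]
    exact (mem_sg.mp ha').2 z hz hza
  · rw [hx A Q B (hK.pt A hA) hQ (hK.pt B hB) (hKW A hA) hQW (hKW B hB) (hne A hA)]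
    exact hBAQ
  · rw [Finset.card_insert_of_notMem hAE0, hE0c]; omega

end Part3

open Module
set_option linter.unusedSectionVars false

section Part4
open Classical

theorem arith_T {q s t : ℕ} (hq : 16 ≤ q) (ht : t + 1 ≤ 2 * q) (hs : q < 2 * s) (hst : s + 1 ≤ t)
    (h : (s + 1) * (q ^ 2 + q + 1) ≤ (s + 1) * t + (s + 1) * s ^ 2 + (t - (s + 1)) * (t - 1)) :
    q ≤ s + 1 := by
  by_contra hcon
  push Not at hcon
  obtain ⟨j, rfl⟩ : ∃ j, q = s + 2 + j := ⟨q - (s + 2), by omega⟩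
  obtain ⟨m, hm⟩ : ∃ m, t + 1 + m = 2 * (s + 2 + j) := ⟨2 * (s + 2 + j) - (t + 1), by omega⟩
  obtain ⟨i, rfl⟩ : ∃ i, s = j + 3 + i := ⟨s - (j + 3), by omega⟩
  obtain ⟨u, rfl⟩ : ∃ u, t = j + 3 + i + 1 + u := ⟨t - (j + 3 + i + 1), by omega⟩
  have e1 : j + 3 + i + 1 + u - (j + 3 + i + 1) = u := by omega
  have e2 : j + 3 + i + 1 + u - 1 = j + 3 + i + u := by omega
  rw [e1, e2] at h
  have hu : u + m = 3 * j + i + 5 := by omega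
  clear e1 e2 hcon
  zify at *
  have hu' : (u : ℤ) = 3 * j + i + 5 - m := by linarith
  have hm' : (0 : ℤ) ≤ m := by positivity
  have hj' : (0 : ℤ) ≤ j := by positivity
  have hi' : (0 : ℤ) ≤ i := by positivity
  have hu0 : (0 : ℤ) ≤ u := by positivity
  rw [hu'] at h
  have hmu : (m : ℤ) ≤ 3 * j + i + 5 := by linarith
  nlinarith [mul_nonneg hj' hi', mul_nonneg hm' hj', mul_nonneg hm' hi', mul_nonneg hj' hj', mul_nonneg hi' hi', mul_nonneg (mul_nonneg hj' hi') hi', mul_nonneg (mul_nonneg hj' hj') hi', mul_nonneg (mul_nonneg hj' hj') hj', mul_nonneg hm' (sub_nonneg.mpr hmu)]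

theorem T_lemma {α β : Type*} (T : Finset α) (Bl : Finset β) (I : α → β → Prop) {q : ℕ} (hq : 16 ≤ q)
    (huni : ∀ x ∈ T, ∀ y ∈ T, x ≠ y → ∃ b ∈ Bl, I x b ∧ I y b ∧ ∀ b' ∈ Bl, I x b' → I y b' → b' = b)
    (hcap : ∀ x ∈ T, q ^ 2 + q + 1 ≤ T.card +
      ∑ b ∈ Bl.filter (I x ·), ((T.filter (I · b)).card - 1) ^ 2)
    (ht : T.card + 1 ≤ 2 * q) (hne : T.Nonempty) : ∃ b ∈ Bl, ∀ x ∈ T, I x b := by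
  set w : β → ℕ := fun b => (T.filter (I · b)).card - 1 with hw
  -- counting
  have cnt : ∀ x ∈ T, ∀ R ⊆ T, x ∉ R →
      ∑ b ∈ Bl.filter (I x ·), (R.filter (I · b)).card = R.card := by
    intro x hx R hR hxR
    have := Finset.sum_card_bipartiteAbove_eq_sum_card_bipartiteBelow (s := Bl.filter (I x ·)) (t := R)
      (fun b y => I y b)
    simp only [Finset.bipartiteAbove, Finset.bipartiteBelow] at this
    rw [this, Finset.card_eq_sum_ones]
    refine Finset.sum_congr rfl fun y hy => ?_
    obtain ⟨b, hb, h1, h2, h3⟩ := huni x hx y (hR hy) (fun h => hxR (h ▸ hy))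
    rw [Finset.card_eq_one]
    refine ⟨b, ?_⟩
    ext b'
    simp only [Finset.mem_filter, Finset.mem_singleton]
    constructor
    · rintro ⟨⟨h4, h5⟩, h6⟩
      exact h3 b' h4 h5 h6
    · rintro rfl
      exact ⟨⟨hb, h1⟩, h2⟩
  have wer : ∀ x ∈ T, ∀ b, I x b → w b = ((T.erase x).filter (I · b)).card := by
    intro x hx b hb
    rw [Finset.filter_erase, Finset.card_erase_of_mem (by simp [hx, hb])]
  have wsum : ∀ x ∈ T, ∑ b ∈ Bl.filter (I x ·), w b = T.card - 1 := by
    intro x hx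
    rw [← Finset.card_erase_of_mem hx, ← cnt x hx (T.erase x) (Finset.erase_subset _ _) (by simp)]
    refine Finset.sum_congr rfl fun b hb => wer x hx b (Finset.mem_filter.mp hb).2
  have inter : ∀ b ∈ Bl, ∀ b' ∈ Bl, b ≠ b' → ((T.filter (I · b)).filter (I · b')).card ≤ 1 := by
    intro b hb b' hb' hne
    rw [Finset.card_le_one]
    intro x hx y hy
    simp only [Finset.mem_filter] at hx hy
    by_contra hxy
    obtain ⟨b0, _, _, _, h⟩ := huni x hx.1.1 y hy.1.1 hxy
    exact hne ((h b hb hx.1.2 hy.1.2).trans (h b' hb' hx.2 hy.2).symm)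
  have big : ∀ x ∈ T, ∃ b ∈ Bl, I x b ∧ q ≤ w b + 1 := by
    intro x hx
    have h1 : ∃ b ∈ Bl.filter (I x ·), q < 2 * w b := by
      by_contra hcon
      push Not at hcon
      have h2 : 2 * ∑ b ∈ Bl.filter (I x ·), w b ^ 2 ≤ q * ∑ b ∈ Bl.filter (I x ·), w b := by
        rw [Finset.mul_sum, Finset.mul_sum]
        refine Finset.sum_le_sum fun b hb => ?_
        have := hcon b hb
        nlinarith
      rw [wsum x hx] at h2
      have h3 := hcap x hx
      have h4 : q * (T.card - 1) ≤ q * (2 * q - 2) := Nat.mul_le_mul_left _ (by omega)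
      obtain ⟨p, rfl⟩ : ∃ p, q = p + 1 := ⟨q - 1, by omega⟩
      rw [show 2 * (p + 1) - 2 = 2 * p by omega] at h4
      simp only [hw] at h2
      nlinarith
    obtain ⟨b, hb, hqb⟩ := h1
    obtain ⟨hb, hxb⟩ := Finset.mem_filter.mp hb
    refine ⟨b, hb, hxb, ?_⟩
    set M := T.filter (I · b) with hM
    set N := T.filter (¬ I · b) with hN
    have hMN : M.card + N.card = T.card := Finset.card_filter_add_card_filter_not _
    have hM1 : M.card = w b + 1 := by
      have : 0 < M.card := Finset.card_pos.mpr ⟨x, by simp [hM, hx, hxb]⟩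
      change M.card = M.card - 1 + 1
      omega
    have key : ∑ y ∈ M, ∑ b' ∈ (Bl.filter (I y ·)).erase b, w b' ^ 2 ≤ N.card * (T.card - 1) := by
      have e1 : ∀ y ∈ M, ∀ b' ∈ (Bl.filter (I y ·)).erase b, w b' = (N.filter (I · b')).card := by
        intro y hy b' hb'
        obtain ⟨hne', hb'⟩ := Finset.mem_erase.mp hb'
        obtain ⟨hb', hyb'⟩ := Finset.mem_filter.mp hb'
        obtain ⟨hyT, hyb⟩ := Finset.mem_filter.mp hy
        rw [wer y hyT b' hyb']
        congr 1
        ext z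
        simp only [Finset.mem_filter, Finset.mem_erase, hN]
        constructor
        · rintro ⟨⟨h1, h2⟩, h3⟩
          refine ⟨⟨h2, fun h4 => ?_⟩, h3⟩
          obtain ⟨b0, _, _, _, h⟩ := huni y hyT z h2 h1.symm
          exact hne' ((h b' hb' hyb' h3).trans (h b hb hyb h4).symm)
        · rintro ⟨⟨h1, h2⟩, h3⟩
          exact ⟨⟨fun h => h2 (h ▸ hyb), h1⟩, h3⟩
      calc ∑ y ∈ M, ∑ b' ∈ (Bl.filter (I y ·)).erase b, w b' ^ 2
          = ∑ y ∈ M, ∑ b' ∈ (Bl.filter (I y ·)).erase b, ∑ z ∈ N.filter (I · b'), w b' := by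
            refine Finset.sum_congr rfl fun y hy => Finset.sum_congr rfl fun b' hb' => ?_
            rw [Finset.sum_const, ← e1 y hy b' hb', smul_eq_mul, sq]
        _ = ∑ b' ∈ Bl.erase b, ∑ z ∈ N.filter (I · b'), ∑ y ∈ M.filter (I · b'), w b' := by
            have : ∀ y ∈ M, ∑ b' ∈ (Bl.filter (I y ·)).erase b, ∑ z ∈ N.filter (I · b'), w b' =
                ∑ b' ∈ Bl.erase b, if I y b' then ∑ z ∈ N.filter (I · b'), w b' else 0 := by
              intro y hy
              rw [← Finset.sum_filter, Finset.filter_erase]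
            rw [Finset.sum_congr rfl this, Finset.sum_comm]
            refine Finset.sum_congr rfl fun b' hb' => ?_
            rw [← Finset.sum_filter, Finset.sum_comm]
        _ ≤ ∑ b' ∈ Bl.erase b, ∑ z ∈ N.filter (I · b'), w b' := by
            refine Finset.sum_le_sum fun b' hb' => Finset.sum_le_sum fun z hz => ?_
            rw [Finset.sum_const, smul_eq_mul]
            have := inter b hb b' (Finset.mem_of_mem_erase hb') (Finset.ne_of_mem_erase hb').symm
            nlinarith
        _ ≤ ∑ b' ∈ Bl, ∑ z ∈ N.filter (I · b'), w b' := 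
            Finset.sum_le_sum_of_subset (Finset.erase_subset _ _)
        _ = ∑ z ∈ N, ∑ b' ∈ Bl.filter (I z ·), w b' := by
            simp only [Finset.sum_filter]
            rw [Finset.sum_comm]
        _ = N.card * (T.card - 1) := by
            rw [Finset.sum_congr rfl (fun z hz => wsum z (Finset.mem_filter.mp hz).1),
              Finset.sum_const, smul_eq_mul]
    have tot : M.card * (q ^ 2 + q + 1) ≤ M.card * T.card + M.card * w b ^ 2 + N.card * (T.card - 1) := by
      have h1 : ∑ y ∈ M, (q ^ 2 + q + 1) ≤ ∑ y ∈ M, (T.card + (w b ^ 2 +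
          ∑ b' ∈ (Bl.filter (I y ·)).erase b, w b' ^ 2)) := by
        refine Finset.sum_le_sum fun y hy => ?_
        obtain ⟨hyT, hyb⟩ := Finset.mem_filter.mp hy
        have := hcap y hyT
        rw [← Finset.add_sum_erase _ _ (show b ∈ Bl.filter (I y ·) by simp [hb, hyb])] at this
        exact this
      rw [Finset.sum_const, smul_eq_mul] at h1
      simp only [Finset.sum_add_distrib, Finset.sum_const, smul_eq_mul] at h1
      linarith
    have hN1 : N.card = T.card - (w b + 1) := by omega
    rw [hM1, hN1] at tot
    exact arith_T hq ht hqb (by omega) tot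
  obtain ⟨x, hx⟩ := hne
  obtain ⟨b, hb, hxb, hwb⟩ := big x hx
  refine ⟨b, hb, ?_⟩
  by_contra hcon
  push Not at hcon
  obtain ⟨y, hy, hyb⟩ := hcon
  obtain ⟨b2, hb2, hyb2, hwb2⟩ := big y hy
  have hbb : b ≠ b2 := fun h => hyb (h ▸ hyb2)
  have hs1 : (T.filter (I · b)).card = w b + 1 := by
    have : 0 < (T.filter (I · b)).card := Finset.card_pos.mpr ⟨x, by simp [hx, hxb]⟩
    simp only [hw]; omega
  have hs2 : (T.filter (I · b2)).card = w b2 + 1 := by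
    have : 0 < (T.filter (I · b2)).card := Finset.card_pos.mpr ⟨y, by simp [hy, hyb2]⟩
    simp only [hw]; omega
  have hintr := inter b hb b2 hb2 hbb
  have hun := Finset.card_union_add_card_inter (T.filter (I · b)) (T.filter (I · b2))
  have hin : (T.filter (I · b)) ∩ (T.filter (I · b2)) = (T.filter (I · b)).filter (I · b2) := by
    ext z; simp only [Finset.mem_inter, Finset.mem_filter]; tauto
  rw [hin] at hun
  have hsubT : (T.filter (I · b)) ∪ (T.filter (I · b2)) ⊆ T :=
    Finset.union_subset (Finset.filter_subset _ _) (Finset.filter_subset _ _)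
  have hule := Finset.card_le_card hsubT
  have hT : (T.filter (I · b)) ∪ (T.filter (I · b2)) = T :=
    Finset.eq_of_subset_of_card_le hsubT (by omega)
  obtain ⟨x', hx', hxpb2⟩ : ∃ x' ∈ T.filter (I · b), ¬ I x' b2 := by
    by_contra hc
    push Not at hc
    rw [Finset.filter_true_of_mem hc] at hintr
    omega
  obtain ⟨hx'T, hx'b⟩ := Finset.mem_filter.mp hx'
  have h1 := hcap x' hx'T
  have h2 := wsum x' hx'T
  have hmem : b ∈ Bl.filter (I x' ·) := by simp [hb, hx'b]
  rw [← Finset.add_sum_erase _ _ hmem] at h1 h2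
  have h3 : ∑ b' ∈ (Bl.filter (I x' ·)).erase b, ((T.filter (I · b')).card - 1) ^ 2 ≤
      ∑ b' ∈ (Bl.filter (I x' ·)).erase b, w b' := by
    refine Finset.sum_le_sum fun b' hb' => ?_
    obtain ⟨hne', hb'⟩ := Finset.mem_erase.mp hb'
    obtain ⟨hb', hxpbp⟩ := Finset.mem_filter.mp hb'
    change w b' ^ 2 ≤ w b'
    have h4 : (T.filter (I · b')).card ≤ 2 := by
      have h5 := inter b hb b' hb' hne'.symm
      have h6 := inter b2 hb2 b' hb' (fun h => hxpb2 (h ▸ hxpbp))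
      have : T.filter (I · b') ⊆ (T.filter (I · b)).filter (I · b') ∪ (T.filter (I · b2)).filter (I · b') := by
        intro z hz
        obtain ⟨hz1, hz2⟩ := Finset.mem_filter.mp hz
        rw [← hT] at hz1
        simp only [Finset.mem_union, Finset.mem_filter] at hz1 ⊢
        tauto
      have := (Finset.card_le_card this).trans (Finset.card_union_le _ _)
      omega
    have h5 : w b' ≤ 1 := by simp only [hw]; omega
    interval_cases (w b') <;> simp
  change q ^ 2 + q + 1 ≤ T.card + (w b ^ 2 + _) at h1
  have hwq : w b = q - 1 := by omega
  have hTq : T.card = 2 * q - 1 := by omega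
  rw [hwq] at h1 h2
  rw [hTq] at h1 h2
  obtain ⟨p, rfl⟩ : ∃ p, q = p + 1 := ⟨q - 1, by omega⟩
  have h9 : 2 * (p + 1) - 1 = 2 * p + 1 := by omega
  rw [h9, Nat.add_sub_cancel] at h1 h2
  have h7 : ∑ b' ∈ (Bl.filter (I x' ·)).erase b, w b' ≤ p := by omega
  nlinarith

end Part4

open Module
set_option linter.unusedSectionVars false

section Part5
open Classical

variable {F V : Type*} [Field F] [Fintype F] [AddCommGroup V] [Module F V] [Finite V]

theorem cov_sum {K : Finset (Submodule F V)} (hK : ∀ P ∈ K, rk P = 1) {r W : Submodule F V}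
    (hr : r ≤ W) :
    ∑ X ∈ cov r W, (res K X).card + (res K r).card
      = (res K W).card + (cov r W).card * (res K r).card := by
  have h1 := fiber_sum hr ((res K W).filter (¬ · ≤ r)) (by
    intro P hP
    simp only [Finset.mem_filter, mem_res] at hP
    exact ⟨hK P hP.1.1, hP.2, hP.1.2⟩)
  have h2 : ∀ X ∈ cov r W, (res K X).card =
      (((res K W).filter (¬ · ≤ r)).filter (· ≤ X)).card + (res K r).card := by
    intro X hX
    obtain ⟨h3, h4, _⟩ := mem_cov.mp hX
    rw [← Finset.card_filter_add_card_filter_not (s := res K X) (p := fun P => ¬ P ≤ r)]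
    congr 2
    · ext P; simp only [Finset.mem_filter, mem_res]
      constructor
      · rintro ⟨⟨a, b⟩, c⟩; exact ⟨⟨⟨a, b.trans h4⟩, c⟩, b⟩
      · rintro ⟨⟨⟨a, b⟩, c⟩, d⟩; exact ⟨⟨a, d⟩, c⟩
    · ext P; simp only [Finset.mem_filter, mem_res, not_not]
      constructor
      · rintro ⟨⟨a, b⟩, c⟩; exact ⟨a, c⟩
      · rintro ⟨a, b⟩; exact ⟨⟨a, b.trans h3⟩, b⟩
  have h5 : (res K W).card = ((res K W).filter (¬ · ≤ r)).card + (res K r).card := by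
    rw [← Finset.card_filter_add_card_filter_not (s := res K W) (p := fun P => ¬ P ≤ r)]
    congr 2
    ext P; simp only [Finset.mem_filter, mem_res, not_not]
    constructor
    · rintro ⟨⟨a, b⟩, c⟩; exact ⟨a, c⟩
    · rintro ⟨a, b⟩; exact ⟨⟨a, b.trans hr⟩, b⟩
  rw [Finset.sum_congr rfl h2, Finset.sum_add_distrib, h1, Finset.sum_const, smul_eq_mul, h5]
  omega

theorem res_pt {K : Finset (Submodule F V)} (hK : SCap K) {P : Submodule F V} (hP : P ∈ K) :
    res K P = {P} := by
  ext R
  simp only [mem_res, Finset.mem_singleton]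
  constructor
  · rintro ⟨h1, h2⟩; exact pt_le_pt (hK.pt R h1) (hK.pt P hP) h2
  · rintro rfl; exact ⟨hP, le_rfl⟩

theorem res_secant {K : Finset (Submodule F V)} (hK : SCap K) {A B : Submodule F V} (hA : A ∈ K)
    (hB : B ∈ K) (hAB : A ≠ B) : res K (A ⊔ B) = {A, B} := by
  ext R
  simp only [mem_res, Finset.mem_insert, Finset.mem_singleton]
  constructor
  · rintro ⟨h1, h2⟩
    by_contra hc
    push Not at hc
    exact hK.cap A hA B hB R h1 hAB hc.1.symm hc.2.symm h2
  · rintro (rfl | rfl)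
    · exact ⟨hA, le_sup_left⟩
    · exact ⟨hB, le_sup_right⟩

theorem card_res_secant {K : Finset (Submodule F V)} (hK : SCap K) {A B : Submodule F V} (hA : A ∈ K)
    (hB : B ∈ K) (hAB : A ≠ B) : (res K (A ⊔ B)).card = 2 := by
  rw [res_secant hK hA hB hAB, Finset.card_pair hAB]

/-- a secant through Q kills the points of K on it -/
theorem secant_not_sg {K : Finset (Submodule F V)} (hK : SCap K) {A B Q : Submodule F V} (hA : A ∈ K)
    (hB : B ∈ K) (hAB : A ≠ B) (hQ : rk Q = 1) (hQK : Q ∉ K) (hQAB : Q ≤ A ⊔ B) : A ∉ sg K Q := by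
  intro h
  have hne : Q ≠ A := fun h => hQK (h ▸ hA)
  refine (mem_sg.mp h).2 B hB hAB.symm ?_
  rw [sup_comm, line_eq (hK.pt B hB) (hK.pt A hA) hQ (by rwa [sup_comm]) hne]
  exact le_sup_left

theorem sg_res_secant {K : Finset (Submodule F V)} (hK : SCap K) {A B Q : Submodule F V} (hA : A ∈ K)
    (hB : B ∈ K) (hAB : A ≠ B) (hQ : rk Q = 1) (hQK : Q ∉ K) (hQAB : Q ≤ A ⊔ B) :
    res (sg K Q) (A ⊔ B) = ∅ := by
  rw [Finset.eq_empty_iff_forall_notMem]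
  intro P hP
  obtain ⟨h1, h2⟩ := mem_res.mp hP
  have : P ∈ res K (A ⊔ B) := mem_res.mpr ⟨sg_sub K Q h1, h2⟩
  rw [res_secant hK hA hB hAB] at this
  rcases Finset.mem_insert.mp this with rfl | h
  · exact secant_not_sg hK hA hB hAB hQ hQK hQAB h1
  · rw [Finset.mem_singleton] at h
    subst h
    exact secant_not_sg hK hB hA hAB.symm hQ hQK (by rwa [sup_comm]) h1

theorem onSec_res {K : Finset (Submodule F V)} {A B Q W : Submodule F V} (hA : A ∈ K)
    (hB : B ∈ K) (hAB : A ≠ B) (hQAB : Q ≤ A ⊔ B) (h : A ⊔ B ≤ W) : OnSec (res K W) Q :=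
  ⟨A, mem_res.mpr ⟨hA, le_sup_left.trans h⟩, B, mem_res.mpr ⟨hB, le_sup_right.trans h⟩, hAB, hQAB⟩

/-- plane lemma, restricted form -/
theorem plane_lemma' (h2 : (2 : F) = 0) {X : Submodule F V} (hX : rk X = 3)
    {K : Finset (Submodule F V)} (hK : SCap K) {Q : Submodule F V}
    (hQ : rk Q = 1) (hQK : Q ∉ K) (hsec : OnSec (res K X) Q) :
    (res (sg K Q) X).card + (res K X).card ≤ Fintype.card F + 2 := by
  have hQX : Q ≤ X := by
    obtain ⟨A, hA, B, hB, _, h⟩ := hsec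
    exact h.trans (sup_le (mem_res.mp hA).2 (mem_res.mp hB).2)
  rw [← sg_res hQX]
  exact plane_lemma h2 hX (hK.rs X) (fun P hP => (mem_res.mp hP).2) hQ
    (fun h => hQK (mem_res.mp h).1) hsec

theorem L2gen (h2 : (2 : F) = 0) {K : Finset (Submodule F V)} (hK : SCap K) {A B Q W : Submodule F V}
    (hA : A ∈ K) (hB : B ∈ K) (hAB : A ≠ B) (hQ : rk Q = 1) (hQK : Q ∉ K) (hQAB : Q ≤ A ⊔ B)
    (h : A ⊔ B ≤ W) :
    (res (sg K Q) W).card + (res K W).card ≤ 2 + Fintype.card F * (cov (A ⊔ B) W).card := by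
  have s1 := cov_sum hK.pt h
  have s2 := cov_sum (K := sg K Q) (fun P hP => hK.pt P (sg_sub K Q hP)) h
  rw [sg_res_secant hK hA hB hAB hQ hQK hQAB] at s2
  rw [card_res_secant hK hA hB hAB] at s1
  simp only [Finset.card_empty, add_zero, mul_zero] at s2
  have s3 : ∑ X ∈ cov (A ⊔ B) W, ((res (sg K Q) X).card + (res K X).card) ≤
      ∑ X ∈ cov (A ⊔ B) W, (Fintype.card F + 2) := by
    refine Finset.sum_le_sum fun X hX => ?_
    obtain ⟨h3, h4, h5⟩ := mem_cov.mp hX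
    rw [rk_line (hK.pt A hA) (hK.pt B hB) hAB] at h5
    exact plane_lemma' h2 h5 hK hQ hQK (onSec_res hA hB hAB hQAB h3)
  rw [Finset.sum_add_distrib, s2, Finset.sum_const, smul_eq_mul] at s3
  nlinarith

theorem L2four (h2 : (2 : F) = 0) {K : Finset (Submodule F V)} (hK : SCap K) {Q W : Submodule F V}
    (hW : rk W = 4) (hQ : rk Q = 1) (hQK : Q ∉ K) (hsec : OnSec (res K W) Q) :
    (res (sg K Q) W).card + (res K W).card ≤ Fintype.card F ^ 2 + Fintype.card F + 2 := by
  obtain ⟨A, hA, B, hB, hAB, h⟩ := hsec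
  obtain ⟨hA, hAW⟩ := mem_res.mp hA
  obtain ⟨hB, hBW⟩ := mem_res.mp hB
  have h1 := L2gen h2 hK hA hB hAB hQ hQK h (sup_le hAW hBW)
  rw [card_cov_two (sup_le hAW hBW) (by rw [hW, rk_line (hK.pt A hA) (hK.pt B hB) hAB])] at h1
  nlinarith

theorem L2five (h2 : (2 : F) = 0) {K : Finset (Submodule F V)} (hK : SCap K) {Q W : Submodule F V}
    (hW : rk W = 5) (hQ : rk Q = 1) (hQK : Q ∉ K) (hsec : OnSec (res K W) Q) :
    (res (sg K Q) W).card + (res K W).card ≤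
      Fintype.card F ^ 3 + Fintype.card F ^ 2 + Fintype.card F + 2 := by
  obtain ⟨A, hA, B, hB, hAB, h⟩ := hsec
  obtain ⟨hA, hAW⟩ := mem_res.mp hA
  obtain ⟨hB, hBW⟩ := mem_res.mp hB
  have h1 := L2gen h2 hK hA hB hAB hQ hQK h (sup_le hAW hBW)
  rw [card_cov_three (sup_le hAW hBW) (by rw [hW, rk_line (hK.pt A hA) (hK.pt B hB) hAB])] at h1
  nlinarith

/-- tangent lines at P inside X -/
noncomputable def tang (K : Finset (Submodule F V)) (P X : Submodule F V) : Finset (Submodule F V) :=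
  (cov P X).filter (fun l => res K l = {P})

theorem mem_tang {K : Finset (Submodule F V)} {P X l : Submodule F V} :
    l ∈ tang K P X ↔ (P ≤ l ∧ l ≤ X ∧ rk l = rk P + 1) ∧ res K l = {P} := by
  simp [tang, mem_cov]

theorem tang_count {K : Finset (Submodule F V)} (hK : SCap K) {P X : Submodule F V} (hP : P ∈ K)
    (hPX : P ≤ X) : (tang K P X).card + (res K X).card = (cov P X).card + 1 := by
  have s1 := cov_sum hK.pt hPX
  rw [res_pt hK hP, Finset.card_singleton, mul_one] at s1
  have s2 : ∑ l ∈ cov P X, ((res K l).card + if res K l = {P} then 1 else 0) =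
      ∑ l ∈ cov P X, 2 := by
    refine Finset.sum_congr rfl fun l hl => ?_
    split_ifs with h
    · rw [h, Finset.card_singleton]
    · obtain ⟨h1, h3, h4⟩ := mem_cov.mp hl
      have hPl : P ∈ res K l := mem_res.mpr ⟨hP, h1⟩
      obtain ⟨R, hR, hRP⟩ : ∃ R ∈ res K l, R ≠ P := by
        by_contra hc
        push Not at hc
        exact h (Finset.eq_singleton_iff_unique_mem.mpr ⟨hPl, hc⟩)
      obtain ⟨hRK, hRl⟩ := mem_res.mp hR
      have : P ⊔ R = l := sup_eq_of_cov hl (hK.pt R hRK)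
        (fun h => hRP (pt_le_pt (hK.pt R hRK) (hK.pt P hP) h)) hRl
      rw [← this, card_res_secant hK hP hRK hRP.symm]
  rw [Finset.sum_add_distrib, ← Finset.card_filter, Finset.sum_const, smul_eq_mul] at s2
  change _ + (tang K P X).card = _ at s2
  omega

theorem arc_le {K : Finset (Submodule F V)} (hK : SCap K) {X : Submodule F V} (hX : rk X = 3) :
    (res K X).card ≤ Fintype.card F + 2 := by
  rcases (res K X).eq_empty_or_nonempty with h | ⟨P, hP⟩
  · rw [h]; simp
  · obtain ⟨hP, hPX⟩ := mem_res.mp hP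
    have := tang_count hK hP hPX
    rw [card_cov_two hPX (by rw [hX, hK.pt P hP])] at this
    omega

theorem solid_tang {K : Finset (Submodule F V)} (hK : SCap K) {X P : Submodule F V} (hX : rk X = 4)
    (hP : P ∈ K) (hPX : P ≤ X) : (tang K P X).card + (res K X).card =
      Fintype.card F ^ 2 + Fintype.card F + 2 := by
  rw [tang_count hK hP hPX, card_cov_three hPX (by rw [hX, hK.pt P hP])]

theorem plane_tang {K : Finset (Submodule F V)} (hK : SCap K) {X P : Submodule F V} (hX : rk X = 3)
    (hP : P ∈ K) (hPX : P ≤ X) : (tang K P X).card + (res K X).card = Fintype.card F + 2 := by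
  rw [tang_count hK hP hPX, card_cov_two hPX (by rw [hX, hK.pt P hP])]

/-- the number of points of a subspace -/
theorem cov_bot_mem {Q X : Submodule F V} : Q ∈ cov ⊥ X ↔ Q ≤ X ∧ rk Q = 1 := by
  rw [mem_cov]; simp

end Part5

open Module
set_option linter.unusedSectionVars false

section Part6
open Classical

variable {F V : Type*} [Field F] [Fintype F] [AddCommGroup V] [Module F V] [Finite V]

theorem res_eq_self {K : Finset (Submodule F V)} {W : Submodule F V} (h : ∀ P ∈ K, P ≤ W) :
    res K W = K := Finset.filter_true_of_mem h

/-- two rank 2 subspaces in a rank 3 subspace meet in a point -/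
theorem inf_lines {l m X : Submodule F V} (hl : rk l = 2) (hm : rk m = 2) (hX : rk X = 3)
    (hlX : l ≤ X) (hmX : m ≤ X) (hne : l ≠ m) : rk (l ⊓ m) = 1 := by
  have h1 := rk_sup_inf l m
  have h2 : rk (l ⊔ m) ≤ 3 := hX ▸ rk_mono (sup_le hlX hmX)
  have h3 : rk (l ⊔ m) ≠ 2 := by
    intro h
    apply hne
    have e1 : l = l ⊔ m := eq_of_le_rk le_sup_left (by omega)
    have e2 : m = l ⊔ m := eq_of_le_rk le_sup_right (by omega)
    rw [e1, ← e2]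
  have h4 : rk l ≤ rk (l ⊔ m) := rk_mono le_sup_left
  omega

theorem pt_sup_eq {P Q l : Submodule F V} (hP : rk P = 1) (hQ : rk Q = 1) (hl : rk l = 2)
    (hPl : P ≤ l) (hQl : Q ≤ l) (hne : P ≠ Q) : P ⊔ Q = l :=
  eq_of_le_rk (sup_le hPl hQl) (by rw [rk_line hP hQ hne, hl])

/-- points Q on a tangent l at P, from which P' is tangent -/
theorem tang_proj {K : Finset (Submodule F V)} (hK : SCap K) {W P l P' : Submodule F V} 
    (hP : P ∈ K) (hl : l ∈ tang K P W) (hP' : P' ∈ K) (hne : P' ≠ P) :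
    (tang K P' (l ⊔ P')).card ≤
      (((cov ⊥ l).erase P).filter (fun Q => P' ∈ sg K Q)).card := by
  obtain ⟨⟨h1, h3, h4⟩, h5⟩ := mem_tang.mp hl
  have hP1 := hK.pt P hP
  have hP'1 := hK.pt P' hP'
  have hl2 : rk l = 2 := by omega
  have hP'l : ¬ P' ≤ l := by
    intro h
    have : P' ∈ res K l := mem_res.mpr ⟨hP', h⟩
    rw [h5, Finset.mem_singleton] at this
    exact hne this
  have hπ : rk (l ⊔ P') = 3 := by rw [rk_sup_pt hP'1 hP'l, hl2]
  have key : ∀ m ∈ tang K P' (l ⊔ P'), rk (m ⊓ l) = 1 ∧ P' ⊔ (m ⊓ l) = m := by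
    intro m hm
    obtain ⟨⟨a1, a2, a3⟩, a4⟩ := mem_tang.mp hm
    have hr : rk (m ⊓ l) = 1 := inf_lines (by omega) hl2 hπ a2 le_sup_left
      (fun h => hP'l (h ▸ a1))
    refine ⟨hr, pt_sup_eq hP'1 hr (by omega) a1 inf_le_left fun h => hP'l (h ▸ inf_le_right)⟩
  apply Finset.card_le_card_of_injOn (fun m => m ⊓ l)
  · intro m hm
    obtain ⟨⟨a1, a2, a3⟩, a4⟩ := mem_tang.mp hm
    obtain ⟨b1, b2⟩ := key m hm
    simp only [Finset.coe_filter, Finset.mem_erase, Set.mem_ofPred_eq, cov_bot_mem]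
    refine ⟨⟨?_, inf_le_right, b1⟩, ?_⟩
    · intro h
      have : P ∈ res K m := mem_res.mpr ⟨hP, h ▸ inf_le_left⟩
      rw [a4, Finset.mem_singleton] at this
      exact hne this.symm
    · rw [mem_sg, b2]
      refine ⟨hP', fun R hR hRne hRm => ?_⟩
      have : R ∈ res K m := mem_res.mpr ⟨hR, hRm⟩
      rw [a4, Finset.mem_singleton] at this
      exact hRne this
  · intro m hm m' hm' h
    simp only at h
    rw [← (key m hm).2, h, (key m' hm').2]

theorem arith_cap {q p t k a b s S2 : ℕ} (hp : q = p + 1) (ht : t + k = q ^ 2 + q + 2)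
    (hab : a ≤ b) (hb : b + q ≤ q * t) (hs : s + 1 = k + (q + 1))
    (h : a + S2 + (q - 1) * s = (q + 1) * (q ^ 2 + q - 1)) : q ^ 2 + q + 1 ≤ t + S2 := by
  subst hp
  rw [Nat.add_sub_cancel, show (p + 1) ^ 2 + (p + 1) - 1 = (p + 1) ^ 2 + p by omega] at h
  zify at *
  have hk : (k : ℤ) = (p + 1) ^ 2 + (p + 1) + 2 - t := by linarith
  have hs' : (s : ℤ) = k + (p + 1) := by linarith
  rw [hs', hk] at h
  nlinarith

theorem capacity (h2 : (2 : F) = 0) {K : Finset (Submodule F V)} (hK : SCap K) {W P l : Submodule F V}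
    (hW : rk W = 4) (hKW : ∀ P ∈ K, P ≤ W) (hmax : MaxIn K W) (hP : P ∈ K) (hl : l ∈ tang K P W) :
    Fintype.card F ^ 2 + Fintype.card F + 1 ≤ (tang K P W).card +
      ∑ X ∈ cov l W, ((tang K P X).card - 1) ^ 2 := by
  obtain ⟨⟨h1, h3, h4⟩, h5⟩ := mem_tang.mp hl
  have hP1 := hK.pt P hP
  have hl2 : rk l = 2 := by omega
  set q := Fintype.card F with hq
  have ht := solid_tang hK hW hP (hKW P hP)
  rw [res_eq_self hKW] at ht
  set t := (tang K P W).card with htdef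
  have hnl : ∀ R ∈ K.erase P, ¬ R ≤ l := by
    intro R hR h
    have : R ∈ res K l := mem_res.mpr ⟨Finset.mem_of_mem_erase hR, h⟩
    rw [h5, Finset.mem_singleton] at this
    exact Finset.ne_of_mem_erase hR this
  have hQcard : ((cov ⊥ l).erase P).card = q := by
    rw [Finset.card_erase_of_mem (cov_bot_mem.mpr ⟨h1, hP1⟩), card_cov_two bot_le (by simp [hl2])]
    rfl
  -- upper bound
  have up : ∀ Q ∈ (cov ⊥ l).erase P, ((K.erase P).filter (fun R => R ∈ sg K Q)).card + 1 ≤ t := by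
    intro Q hQ
    obtain ⟨hQP, hQ⟩ := Finset.mem_erase.mp hQ
    obtain ⟨hQl, hQ1⟩ := cov_bot_mem.mp hQ
    have hQK : Q ∉ K := by
      intro h
      exact hnl Q (Finset.mem_erase.mpr ⟨hQP, h⟩) hQl
    have hsec := hmax Q hQ1 (hQl.trans h3) hQK
    have := L2four h2 hK hW hQ1 hQK (by rwa [res_eq_self hKW])
    rw [res_eq_self hKW, res_eq_self (fun R hR => hKW R (sg_sub K Q hR))] at this
    have hPs : P ∈ sg K Q := by
      rw [mem_sg, pt_sup_eq hP1 hQ1 hl2 h1 hQl hQP.symm]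
      exact ⟨hP, fun R hR hne => hnl R (Finset.mem_erase.mpr ⟨hne, hR⟩)⟩
    have e : (K.erase P).filter (fun R => R ∈ sg K Q) = (sg K Q).erase P := by
      ext R
      simp only [Finset.mem_filter, Finset.mem_erase]
      exact ⟨fun h => ⟨h.1.1, h.2⟩, fun h => ⟨⟨h.1, sg_sub K Q h.2⟩, h.2⟩⟩
    rw [e, Finset.card_erase_of_mem hPs]
    have : 0 < (sg K Q).card := Finset.card_pos.mpr ⟨P, hPs⟩
    omega
  have up2 : ∑ Q ∈ (cov ⊥ l).erase P, ((K.erase P).filter (fun R => R ∈ sg K Q)).card + q ≤ q * t := by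
    have := Finset.sum_le_sum up
    rw [Finset.sum_add_distrib, Finset.sum_const, Finset.sum_const, hQcard] at this
    simpa using this
  have dc := Finset.sum_card_bipartiteAbove_eq_sum_card_bipartiteBelow (s := (cov ⊥ l).erase P)
    (t := K.erase P) (fun Q R => R ∈ sg K Q)
  simp only [Finset.bipartiteAbove, Finset.bipartiteBelow] at dc
  rw [dc] at up2
  have low : ∑ R ∈ K.erase P, (tang K R (l ⊔ R)).card ≤
      ∑ R ∈ K.erase P, (((cov ⊥ l).erase P).filter (fun Q => R ∈ sg K Q)).card := by
    refine Finset.sum_le_sum fun R hR => ?_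
    exact tang_proj hK hP hl (Finset.mem_of_mem_erase hR) (Finset.ne_of_mem_erase hR)
  -- regroup by planes
  have hfib : ∑ R ∈ K.erase P, (tang K R (l ⊔ R)).card =
      ∑ X ∈ cov l W, ((res K X).card - 1) * (tang K P X).card := by
    rw [← Finset.sum_fiberwise_of_maps_to (s := K.erase P) (t := cov l W) (g := fun R => l ⊔ R)]
    · refine Finset.sum_congr rfl fun X hX => ?_
      obtain ⟨x1, x2, x3⟩ := mem_cov.mp hX
      have hX3 : rk X = 3 := by omega
      have hPX := h1.trans x1
      rw [Finset.sum_congr rfl (g := fun _ => (tang K P X).card)]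
      · rw [Finset.sum_const, smul_eq_mul]
        congr 1
        rw [← Finset.card_erase_of_mem (mem_res.mpr ⟨hP, hPX⟩)]
        congr 1
        ext R
        simp only [Finset.mem_filter, Finset.mem_erase, mem_res]
        constructor
        · rintro ⟨⟨a, b⟩, c⟩
          exact ⟨a, b, c ▸ le_sup_right⟩
        · rintro ⟨a, b, c⟩
          exact ⟨⟨a, b⟩, sup_eq_of_cov hX (hK.pt R b) (hnl R (Finset.mem_erase.mpr ⟨a, b⟩)) c⟩
      · intro R hR
        obtain ⟨hR, hRX⟩ := Finset.mem_filter.mp hR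
        have hRK := Finset.mem_of_mem_erase hR
        rw [hRX]
        have a1 := plane_tang hK hX3 hRK (hRX ▸ le_sup_right)
        have a2 := plane_tang hK hX3 hP hPX
        omega
    · intro R hR
      exact sup_mem_cov h3 (hK.pt R (Finset.mem_of_mem_erase hR)) (hnl R hR)
        (hKW R (Finset.mem_of_mem_erase hR))
  have s1 := cov_sum hK.pt h3
  rw [h5, Finset.card_singleton, mul_one, res_eq_self hKW,
    card_cov_two h3 (by rw [hW, hl2])] at s1
  have pw : ∀ X ∈ cov l W, ∃ w : ℕ, (tang K P X).card = w + 1 ∧ (res K X).card + w = q + 1 ∧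
      1 ≤ (res K X).card := by
    intro X hX
    obtain ⟨x1, x2, x3⟩ := mem_cov.mp hX
    have hX3 : rk X = 3 := by omega
    have hPX := h1.trans x1
    have a2 := plane_tang hK hX3 hP hPX
    have : l ∈ tang K P X := mem_tang.mpr ⟨⟨h1, x1, h4⟩, h5⟩
    have : 0 < (tang K P X).card := Finset.card_pos.mpr ⟨l, this⟩
    have : 0 < (res K X).card := Finset.card_pos.mpr ⟨P, mem_res.mpr ⟨hP, hPX⟩⟩
    exact ⟨(tang K P X).card - 1, by omega, by omega, by omega⟩
  have pid : ∑ X ∈ cov l W, (((res K X).card - 1) * (tang K P X).card + ((tang K P X).card - 1) ^ 2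
      + (q - 1) * (res K X).card)
      = ∑ X ∈ cov l W, (q ^ 2 + q - 1) := by
    refine Finset.sum_congr rfl fun X hX => ?_
    obtain ⟨w, w1, w2, w3⟩ := pw X hX
    obtain ⟨m, hm⟩ : ∃ m, (res K X).card = m + 1 := ⟨(res K X).card - 1, by omega⟩
    have hq1 : 1 < q := Fintype.one_lt_card
    have hqq : q = m + w := by omega
    rw [w1, hm]
    simp only [Nat.add_sub_cancel]
    obtain ⟨p, hp⟩ : ∃ p, q = p + 1 := ⟨q - 1, by omega⟩
    rw [hp, Nat.add_sub_cancel, show (p + 1) ^ 2 + (p + 1) - 1 = (p + 1) ^ 2 + p by omega]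
    have hpp : p + 1 = m + w := by omega
    zify at hpp ⊢
    have : (p : ℤ) = m + w - 1 := by linarith
    rw [this]; ring
  rw [Finset.sum_add_distrib, Finset.sum_add_distrib, ← hfib, ← Finset.mul_sum, Finset.sum_const,
    smul_eq_mul, card_cov_two h3 (by rw [hW, hl2])] at pid
  have hq1 : 1 < q := Fintype.one_lt_card
  obtain ⟨p, hp⟩ : ∃ p, q = p + 1 := ⟨q - 1, by omega⟩
  rw [← hq] at pid s1 ht
  exact arith_cap hp ht (low.trans le_rfl) up2 s1 pid

end Part6

open Module
set_option linter.unusedSectionVars false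

section Part7
open Classical

variable {F V : Type*} [Field F] [Fintype F] [AddCommGroup V] [Module F V] [Finite V]

theorem inf_planes {l m X : Submodule F V} (hl : rk l = 3) (hm : rk m = 3) (hX : rk X = 4)
    (hlX : l ≤ X) (hmX : m ≤ X) (hne : l ≠ m) : rk (l ⊓ m) = 2 := by
  have h1 := rk_sup_inf l m
  have h2 : rk (l ⊔ m) ≤ 4 := hX ▸ rk_mono (sup_le hlX hmX)
  have h3 : rk (l ⊔ m) ≠ 3 := by
    intro h
    apply hne
    have e1 : l = l ⊔ m := eq_of_le_rk le_sup_left (by omega)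
    have e2 : m = l ⊔ m := eq_of_le_rk le_sup_right (by omega)
    rw [e1, ← e2]
  have h4 : rk l ≤ rk (l ⊔ m) := rk_mono le_sup_left
  omega

theorem tang_mono {K : Finset (Submodule F V)} {P X W : Submodule F V} (h : X ≤ W) :
    tang K P X ⊆ tang K P W := by
  intro l hl
  obtain ⟨⟨a, b, c⟩, d⟩ := mem_tang.mp hl
  exact mem_tang.mpr ⟨⟨a, b.trans h, c⟩, d⟩

theorem tang_of_le {K : Finset (Submodule F V)} {P X W l : Submodule F V} (h : l ∈ tang K P W)
    (hX : l ≤ X) : l ∈ tang K P X := by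
  obtain ⟨⟨a, b, c⟩, d⟩ := mem_tang.mp h
  exact mem_tang.mpr ⟨⟨a, hX, c⟩, d⟩

/-- all tangents at P in one plane -/
theorem tang_plane (h2 : (2 : F) = 0) (hq : 16 ≤ Fintype.card F)
    {K : Finset (Submodule F V)} (hK : SCap K) {W P : Submodule F V}
    (hW : rk W = 4) (hKW : ∀ P ∈ K, P ≤ W) (hmax : MaxIn K W) (hP : P ∈ K)
    (hk : Fintype.card F ^ 2 + 3 ≤ K.card + Fintype.card F) (hne : (tang K P W).Nonempty) :
    K.card = Fintype.card F ^ 2 + 1 ∧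
    ∃ X, P ≤ X ∧ X ≤ W ∧ rk X = 3 ∧ (tang K P X = cov P X) ∧ (∀ l ∈ tang K P W, l ≤ X) ∧
      (res K X).card = 1 := by
  have hP1 := hK.pt P hP
  have ht := solid_tang hK hW hP (hKW P hP)
  rw [res_eq_self hKW] at ht
  obtain ⟨X, hX, hTX⟩ := T_lemma (tang K P W)
    (Finset.univ.filter (fun X : Submodule F V => P ≤ X ∧ X ≤ W ∧ rk X = 3)) (fun l X => l ≤ X) hq (by
      intro l hl m hm hlm
      obtain ⟨⟨l1, l2, l3⟩, l4⟩ := mem_tang.mp hl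
      obtain ⟨⟨m1, m2, m3⟩, m4⟩ := mem_tang.mp hm
      have hrk : rk (l ⊔ m) = 3 := by
        have h1 := rk_sup_inf l m
        have h3 : rk P ≤ rk (l ⊓ m) := rk_mono (le_inf l1 m1)
        have h4 : rk (l ⊓ m) ≠ 2 := by
          intro h
          have e1 : l ⊓ m = l := eq_of_le_rk inf_le_left (by omega)
          have e2 : l ⊓ m = m := eq_of_le_rk inf_le_right (by omega)
          exact hlm (e1.symm.trans e2)
        have h5 : rk (l ⊓ m) ≤ rk l := rk_mono inf_le_left
        omega
      refine ⟨l ⊔ m, ?_, le_sup_left, le_sup_right, ?_⟩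
      · simp only [Finset.mem_filter, Finset.mem_univ, true_and]
        exact ⟨l1.trans le_sup_left, sup_le l2 m2, hrk⟩
      · intro Y hY hlY hmY
        simp only [Finset.mem_filter, Finset.mem_univ, true_and] at hY
        exact (eq_of_le_rk (sup_le hlY hmY) (by omega)).symm)
    (by
      intro l hl
      have := capacity h2 hK hW hKW hmax hP hl
      obtain ⟨⟨l1, l2, l3⟩, l4⟩ := mem_tang.mp hl
      convert this using 3
      · ext Y
        simp only [Finset.mem_filter, Finset.mem_univ, true_and, mem_cov]
        constructor
        · rintro ⟨⟨a, b, c⟩, d⟩; exact ⟨d, b, by omega⟩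
        · rintro ⟨a, b, c⟩; exact ⟨⟨l1.trans a, b, by omega⟩, a⟩
      · rename_i Y hY
        have e : (tang K P W).filter (· ≤ Y) = tang K P Y := by
          ext m
          simp only [Finset.mem_filter]
          constructor
          · rintro ⟨a, b⟩; exact tang_of_le a b
          · intro a
            obtain ⟨_, y2, _⟩ := mem_cov.mp hY
            exact ⟨tang_mono y2 a, (mem_tang.mp a).1.2.1⟩
        rw [e])
    (by nlinarith) hne
  simp only [Finset.mem_filter, Finset.mem_univ, true_and] at hX
  obtain ⟨hPX, hXW, hX3⟩ := hX
  obtain ⟨l, hl⟩ := hne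
  have hcap := capacity h2 hK hW hKW hmax hP hl
  have hlX := hTX l hl
  obtain ⟨⟨l1, l2, l3⟩, l4⟩ := mem_tang.mp hl
  have hTeq : tang K P X = tang K P W :=
    Finset.Subset.antisymm (tang_mono hXW) (fun m hm => tang_of_le hm (hTX m hm))
  have hXc : X ∈ cov l W := mem_cov.mpr ⟨hlX, hXW, by omega⟩
  rw [← Finset.add_sum_erase _ _ hXc] at hcap
  have hz : ∑ Y ∈ (cov l W).erase X, ((tang K P Y).card - 1) ^ 2 = 0 := by
    refine Finset.sum_eq_zero fun Y hY => ?_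
    obtain ⟨hYX, hY⟩ := Finset.mem_erase.mp hY
    obtain ⟨y1, y2, y3⟩ := mem_cov.mp hY
    have hi := inf_planes (by omega : rk Y = 3) hX3 hW y2 hXW hYX
    have hli : l = Y ⊓ X := eq_of_le_rk (le_inf y1 hlX) (by omega)
    have : (tang K P Y).card ≤ 1 := by
      rw [Finset.card_le_one]
      have : ∀ m ∈ tang K P Y, m = l := by
        intro m hm
        have hmX := hTX m (tang_mono y2 hm)
        obtain ⟨⟨m1, m2, m3⟩, m4⟩ := mem_tang.mp hm
        rw [hli]
        exact eq_of_le_rk (le_inf m2 hmX) (by omega)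
      intro a ha b hb
      rw [this a ha, this b hb]
    have : (tang K P Y).card - 1 = 0 := by omega
    rw [this]; rfl
  rw [hz, hTeq] at hcap
  have hcov : (cov P X).card = Fintype.card F + 1 := card_cov_two hPX (by omega)
  have hle : (tang K P W).card ≤ Fintype.card F + 1 := by
    rw [← hTeq, ← hcov]; exact Finset.card_le_card (Finset.filter_subset _ _)
  have hge : Fintype.card F + 1 ≤ (tang K P W).card := by
    by_contra hc
    obtain ⟨p, hp⟩ : ∃ p, (tang K P W).card = p + 1 :=
      ⟨(tang K P W).card - 1, by have := Finset.card_pos.mpr ⟨l, hl⟩; omega⟩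
    rw [hp, Nat.add_sub_cancel] at hcap
    have : p + 1 ≤ Fintype.card F := by omega
    nlinarith
  have hEq : tang K P X = cov P X :=
    Finset.eq_of_subset_of_card_le (Finset.filter_subset _ _) (by rw [hcov, hTeq]; exact hge)
  refine ⟨by nlinarith, X, hPX, hXW, hX3, hEq, hTX, ?_⟩
  have := plane_tang hK hX3 hP hPX
  rw [hTeq] at this
  omega

theorem no_tang_false (hq : 16 ≤ Fintype.card F)
    {K : Finset (Submodule F V)} (hK : SCap K) {W : Submodule F V}
    (hW : rk W = 4) (hKW : ∀ P ∈ K, P ≤ W)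
    (hk : K.card = Fintype.card F ^ 2 + Fintype.card F + 2)
    (hno : ∀ P ∈ K, tang K P W = ∅) : False := by
  set q := Fintype.card F with hqd
  have hpts : (cov ⊥ W).card = q ^ 3 + q ^ 2 + q + 1 := card_cov_four bot_le (by simp [hW])
  obtain ⟨Q, hQ, hQK⟩ : ∃ Q ∈ cov ⊥ W, Q ∉ K := by
    by_contra hc
    push Not at hc
    have := Finset.card_le_card (show cov ⊥ W ⊆ K from hc)
    rw [hpts, hk] at this
    have : 0 < q ^ 3 := by positivity
    nlinarith
  obtain ⟨hQW, hQ1⟩ := cov_bot_mem.mp hQ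
  have hresQ : res K Q = ∅ := by
    rw [Finset.eq_empty_iff_forall_notMem]
    intro P hP
    obtain ⟨a, b⟩ := mem_res.mp hP
    exact hQK (pt_le_pt (hK.pt P a) hQ1 b ▸ a)
  have s1 := cov_sum hK.pt hQW
  rw [hresQ, res_eq_self hKW] at s1
  simp only [Finset.card_empty, add_zero, mul_zero] at s1
  obtain ⟨e, he, hez⟩ : ∃ e ∈ cov Q W, res K e = ∅ := by
    by_contra hc
    push Not at hc
    have : ∑ X ∈ cov Q W, (res K X).card = ∑ X ∈ cov Q W, 2 := by
      refine Finset.sum_congr rfl fun l hl => ?_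
      obtain ⟨P, hP⟩ := hc l hl
      obtain ⟨hPK, hPl⟩ := mem_res.mp hP
      obtain ⟨l1, l2, l3⟩ := mem_cov.mp hl
      have hP1 := hK.pt P hPK
      have ht : (tang K P l).card = 0 := by
        have := tang_mono (K := K) (P := P) l2
        rw [hno P hPK, Finset.subset_empty] at this
        rw [this]; rfl
      have htc := tang_count hK hPK hPl
      have hc1 := card_cov hPl (c := 1) (by omega)
      have hc2 : (cov P l).card = 1 := by
        have h1 : 1 < Fintype.card F := Fintype.one_lt_card
        obtain ⟨p, hp⟩ : ∃ p, Fintype.card F = p + 2 := ⟨Fintype.card F - 2, by omega⟩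
        rw [hp, show p + 2 - 1 = p + 1 by omega] at hc1
        apply Nat.eq_of_mul_eq_mul_right (show 0 < p + 1 by omega)
        linarith
      omega
    rw [s1, Finset.sum_const, smul_eq_mul, card_cov_three hQW (by omega), hk, ← hqd] at this
    nlinarith
  obtain ⟨e1, e2, e3⟩ := mem_cov.mp he
  have s2 := cov_sum hK.pt e2
  rw [hez, res_eq_self hKW] at s2
  simp only [Finset.card_empty, add_zero, mul_zero] at s2
  have hdvd : (q + 2) ∣ ∑ X ∈ cov e W, (res K X).card := by
    refine Finset.dvd_sum fun X hX => ?_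
    obtain ⟨x1, x2, x3⟩ := mem_cov.mp hX
    rcases (res K X).eq_empty_or_nonempty with h | ⟨P, hP⟩
    · rw [h]; simp
    · obtain ⟨hPK, hPX⟩ := mem_res.mp hP
      have := plane_tang hK (by omega : rk X = 3) hPK hPX
      have ht := tang_mono (K := K) (P := P) x2
      rw [hno P hPK, Finset.subset_empty] at ht
      rw [ht, Finset.card_empty, zero_add] at this
      rw [this]
  rw [s2, hk] at hdvd
  obtain ⟨c, hc⟩ := hdvd
  have h1 : c < q := by nlinarith
  have h3 : q - 1 < c := by
    obtain ⟨p, hp⟩ : ∃ p, q = p + 1 := ⟨q - 1, by omega⟩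
    rw [hp] at hc ⊢
    rw [Nat.add_sub_cancel]
    nlinarith
  omega

theorem threeD (h2 : (2 : F) = 0) (hq : 16 ≤ Fintype.card F)
    {K : Finset (Submodule F V)} (hK : SCap K) {W : Submodule F V}
    (hW : rk W = 4) (hKW : ∀ P ∈ K, P ≤ W) (hmax : MaxIn K W)
    (hk : Fintype.card F ^ 2 + 3 ≤ K.card + Fintype.card F) :
    K.card = Fintype.card F ^ 2 + 1 ∧
    ∀ X ≤ W, rk X = 3 → 2 ≤ (res K X).card → (res K X).card = Fintype.card F + 1 := by
  have hKne : K.Nonempty := by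
    rw [← Finset.card_pos]; nlinarith
  by_cases hno : ∀ P ∈ K, tang K P W = ∅
  · exfalso
    refine no_tang_false hq hK hW hKW ?_ hno
    obtain ⟨P, hP⟩ := hKne
    have := solid_tang hK hW hP (hKW P hP)
    rw [hno P hP, res_eq_self hKW, Finset.card_empty, zero_add] at this
    exact this
  · push Not at hno
    obtain ⟨P0, hP0, h0⟩ := hno
    obtain ⟨hk1, _⟩ := tang_plane h2 hq hK hW hKW hmax hP0 hk h0
    refine ⟨hk1, fun X hXW hX3 hX2 => ?_⟩
    obtain ⟨P, hP⟩ := Finset.card_pos.mp (by omega : 0 < (res K X).card)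
    obtain ⟨hPK, hPX⟩ := mem_res.mp hP
    have hP1 := hK.pt P hPK
    have ht := solid_tang hK hW hPK (hKW P hPK)
    rw [res_eq_self hKW, hk1] at ht
    obtain ⟨_, Y, hPY, hYW, hY3, hY4, hY5, hY6⟩ := tang_plane h2 hq hK hW hKW hmax hPK hk
      (Finset.card_pos.mp (by omega))
    have hXY : X ≠ Y := by
      rintro rfl
      omega
    have hi := inf_planes hX3 hY3 hW hXW hYW hXY
    have hT : tang K P X = {X ⊓ Y} := by
      ext m
      rw [Finset.mem_singleton]
      constructor
      · intro hm
        have hmY := hY5 m (tang_mono hXW hm)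
        obtain ⟨⟨m1, m2, m3⟩, m4⟩ := mem_tang.mp hm
        exact eq_of_le_rk (le_inf m2 hmY) (by omega)
      · rintro rfl
        have : X ⊓ Y ∈ tang K P Y := by
          rw [hY4]
          exact mem_cov.mpr ⟨le_inf hPX hPY, inf_le_right, by omega⟩
        exact tang_of_le this inf_le_left
    have := plane_tang hK hX3 hPK hPX
    rw [hT, Finset.card_singleton] at this
    omega

/-- bound for any cap in a solid -/
theorem solid_le (h2 : (2 : F) = 0) (hq : 16 ≤ Fintype.card F)
    {K : Finset (Submodule F V)} (hK : SCap K) {W : Submodule F V}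
    (hW : rk W = 4) : (res K W).card ≤ Fintype.card F ^ 2 + 1 := by
  obtain ⟨L, hL, hKL, hLW, hmax⟩ := exists_max (hK.rs W) (W := W) (fun P hP => (mem_res.mp hP).2)
  by_contra hc
  have h1 := Finset.card_le_card hKL
  have := (threeD h2 hq hL hW hLW hmax (by omega)).1
  omega

end Part7

open Module
set_option linter.unusedSectionVars false

section Part8
open Classical

variable {F V : Type*} [Field F] [Fintype F] [AddCommGroup V] [Module F V] [Finite V]

theorem ext_ne (h2 : (2 : F) = 0) (hq : 16 ≤ Fintype.card F) {L : Finset (Submodule F V)}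
    (hL : SCap L) {W : Submodule F V} (hW : rk W = 3) (hLW : ∀ P ∈ L, P ≤ W)
    (hc : L.card = Fintype.card F) {X Y P : Submodule F V} (hX : rk X = 1) (hY : rk Y = 1)
    (hXW : X ≤ W) (hXL : X ∉ L) (hYL : Y ∉ L) (hXs : ¬ OnSec L X) (hYs : ¬ OnSec L Y)
    (hXY : X ≠ Y) (hP : P ∈ L) : P ⊔ X ≠ P ⊔ Y := by
  intro h
  have hcap := hL.ins hX hXs
  have hP1 := hL.pt P hP
  have hPX : P ≠ X := fun h => hXL (h ▸ hP)
  have hPY : P ≠ Y := fun h => hYL (h ▸ hP)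
  have hYi : Y ∉ insert X L := by
    simp only [Finset.mem_insert, not_or]; exact ⟨hXY.symm, hYL⟩
  have h1 := plane_lemma h2 hW hcap (by
    intro R hR
    rcases Finset.mem_insert.mp hR with rfl | hR
    · exact hXW
    · exact hLW R hR) hY hYi
    ⟨P, Finset.mem_insert_of_mem hP, X, Finset.mem_insert_self _ _, hPX, h ▸ le_sup_right⟩
  rw [Finset.card_insert_of_notMem hXL, hc] at h1
  have hsgY := sg_eq_of_not_onSec hL hY hYL hYs
  have hsub : L.erase P ⊆ sg (insert X L) Y := by
    intro R hR
    obtain ⟨hRP, hRL⟩ := Finset.mem_erase.mp hR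
    have hR' := hRL
    rw [← hsgY] at hR'
    have hR2 := (mem_sg.mp hR').2
    rw [mem_sg]
    refine ⟨Finset.mem_insert_of_mem hRL, fun S hS hSR hle => ?_⟩
    rcases Finset.mem_insert.mp hS with rfl | hS
    · apply hR2 P hP hRP.symm
      have e1 : S ⊔ Y = R ⊔ Y := line_eq (hL.pt R hRL) hY hX hle hXY
      have e2 : S ⊔ Y = P ⊔ Y := line_eq hP1 hY hX (h ▸ le_sup_right) hXY
      rw [← e1, e2]; exact le_sup_left
    · exact hR2 S hS hSR hle
  have := Finset.card_le_card hsub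
  rw [Finset.card_erase_of_mem hP] at this
  omega

theorem three_ext (h2 : (2 : F) = 0) (hq : 16 ≤ Fintype.card F) {L : Finset (Submodule F V)}
    (hL : SCap L) {W : Submodule F V} (hW : rk W = 3) (hLW : ∀ P ∈ L, P ≤ W)
    (hc : L.card = Fintype.card F) (E : Finset (Submodule F V))
    (hE : ∀ X ∈ E, rk X = 1 ∧ X ≤ W ∧ X ∉ L ∧ ¬ OnSec L X) : E.card ≤ 2 := by
  obtain ⟨P, hP⟩ := Finset.card_pos.mp (by omega : 0 < L.card)
  have hP1 := hL.pt P hP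
  have ht := plane_tang hL hW hP (hLW P hP)
  rw [res_eq_self hLW, hc] at ht
  have : E.card ≤ (tang L P W).card := by
    apply Finset.card_le_card_of_injOn (fun X => P ⊔ X)
    · intro X hX
      obtain ⟨x1, x2, x3, x4⟩ := hE X hX
      have hPX : P ≠ X := fun h => x3 (h ▸ hP)
      refine mem_tang.mpr ⟨⟨le_sup_left, sup_le (hLW P hP) x2, by rw [rk_line hP1 x1 hPX, hP1]⟩, ?_⟩
      rw [Finset.eq_singleton_iff_unique_mem]
      refine ⟨mem_res.mpr ⟨hP, le_sup_left⟩, fun R hR => ?_⟩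
      obtain ⟨hRL, hRle⟩ := mem_res.mp hR
      by_contra hne
      have h := sg_eq_of_not_onSec hL x1 x3 x4
      have hP' := hP
      rw [← h] at hP'
      exact (mem_sg.mp hP').2 R hRL hne hRle
    · intro X hX Y hY h
      obtain ⟨x1, x2, x3, x4⟩ := hE X hX
      obtain ⟨y1, y2, y3, y4⟩ := hE Y hY
      by_contra hne
      exact ext_ne h2 hq hL hW hLW hc x1 y1 x2 x3 y3 x4 y4 hne hP h
  omega

/-- standing assumptions: a large maximal cap in rank 5 -/
structure Big (K : Finset (Submodule F V)) : Prop where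
  two : (2 : F) = 0
  hq : 16 ≤ Fintype.card F
  rkV : rk (⊤ : Submodule F V) = 5
  cap : SCap K
  mx : MaxIn K ⊤
  big : Fintype.card F ^ 3 + 4 * Fintype.card F ≤ K.card + Fintype.card F ^ 2

theorem res_top (K : Finset (Submodule F V)) : res K ⊤ = K := res_eq_self (fun _ _ => le_top)

theorem Big.sig {K : Finset (Submodule F V)} (h : Big K) {N : Submodule F V} (hN : rk N = 1)
    (hNK : N ∉ K) : (sg K N).card + K.card ≤
      Fintype.card F ^ 3 + Fintype.card F ^ 2 + Fintype.card F + 2 := by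
  have := L2five h.two h.cap h.rkV hN hNK (by rw [res_top]; exact h.mx N hN le_top hNK)
  rwa [res_top, res_top] at this

theorem inf_solids {l m X : Submodule F V} (hl : rk l = 4) (hm : rk m = 4) (hX : rk X = 3)
    (hlX : X ≤ l) (hmX : X ≤ m) (hne : l ≠ m) : l ⊓ m = X := by
  have h3 : rk (l ⊓ m) ≠ 4 := by
    intro h
    apply hne
    have e1 : l ⊓ m = l := eq_of_le_rk inf_le_left (by omega)
    have e2 : l ⊓ m = m := eq_of_le_rk inf_le_right (by omega)
    exact e1.symm.trans e2
  have h4 : rk (l ⊓ m) ≤ rk l := rk_mono inf_le_left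
  exact (eq_of_le_rk (le_inf hlX hmX) (by omega)).symm

theorem res_inter (K : Finset (Submodule F V)) (X Y : Submodule F V) :
    res K X ∩ res K Y = res K (X ⊓ Y) := by
  ext P; simp only [Finset.mem_inter, mem_res, le_inf_iff]; tauto

/-- an arc of q points inside X bounds the cap -/
theorem Big.no_defect {K : Finset (Submodule F V)} (h : Big K) {X : Submodule F V} (hX : rk X = 3)
    (hXc : (res K X).card = Fintype.card F) : False := by
  set q := Fintype.card F with hqd
  have hq := h.hq
  rw [← hqd] at hq
  set Sm := (cov X ⊤).filter (fun S => q ^ 2 + 3 ≤ (res K S).card + q) with hSm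
  have hex : ∀ S ∈ Sm, ∃ N, rk N = 1 ∧ N ≤ X ∧ N ∉ K ∧ ¬ OnSec (res K X) N ∧ res K S ⊆ sg K N := by
    intro S hS
    obtain ⟨hS, hSk⟩ := Finset.mem_filter.mp hS
    obtain ⟨s1, s2, s3⟩ := mem_cov.mp hS
    have hS4 : rk S = 4 := by omega
    obtain ⟨O, hO, hKO, hOS, hmax⟩ := exists_max (h.cap.rs S) (W := S)
      (fun P hP => (mem_res.mp hP).2)
    have hcle := Finset.card_le_card hKO
    obtain ⟨hO1, hO2⟩ := threeD h.two h.hq hO hS4 hOS hmax (by rw [← hqd]; omega)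
    rw [← hqd] at hO1 hO2
    have hsub : res K X ⊆ res O X := by
      intro P hP
      obtain ⟨a, b⟩ := mem_res.mp hP
      exact mem_res.mpr ⟨hKO (mem_res.mpr ⟨a, b.trans s1⟩), b⟩
    have hc := Finset.card_le_card hsub
    have hOX := hO2 X s1 hX (by omega)
    obtain ⟨N, hN, hNK⟩ := Finset.exists_of_ssubset
      (Finset.ssubset_iff_subset_ne.mpr ⟨hsub, fun e => by rw [← e] at hOX; omega⟩)
    obtain ⟨hNO, hNX⟩ := mem_res.mp hN
    have hNK' : N ∉ K := fun h' => hNK (mem_res.mpr ⟨h', hNX⟩)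
    refine ⟨N, hO.pt N hNO, hNX, hNK', ?_, ?_⟩
    · rintro ⟨A, hA, B, hB, hAB, hle⟩
      exact hO.cap A (mem_res.mp (hsub hA)).1 B (mem_res.mp (hsub hB)).1 N hNO hAB
        (fun e => hNK (e ▸ hA)) (fun e => hNK (e ▸ hB)) hle
    · intro R hR
      obtain ⟨hRK, hRS⟩ := mem_res.mp hR
      refine mem_sg.mpr ⟨hRK, fun R' hR' hne hle => ?_⟩
      have hR'S : R' ≤ S := hle.trans (sup_le hRS (hNX.trans s1))
      exact hO.cap R (hKO hR) N hNO R' (hKO (mem_res.mpr ⟨hR', hR'S⟩)) (fun e => hNK' (e ▸ hRK))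
        hne.symm (fun e => hNK' (e ▸ hR')) hle
  choose! f hf using hex
  have hinj : Set.InjOn f Sm := by
    intro S hS S' hS' he
    by_contra hne
    obtain ⟨a1, a2, a3, a4, a5⟩ := hf S hS
    obtain ⟨b1, b2, b3, b4, b5⟩ := hf S' hS'
    rw [← he] at b5
    obtain ⟨hS, hSk⟩ := Finset.mem_filter.mp hS
    obtain ⟨s1, s2, s3⟩ := mem_cov.mp hS
    obtain ⟨hS', hSk'⟩ := Finset.mem_filter.mp hS'
    obtain ⟨t1, t2, t3⟩ := mem_cov.mp hS'
    have hu := Finset.card_le_card (Finset.union_subset a5 b5)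
    have hui := Finset.card_union_add_card_inter (res K S) (res K S')
    rw [res_inter, inf_solids (by omega) (by omega) hX s1 t1 hne, hXc] at hui
    have hs := h.sig a1 a3
    have hb := h.big
    rw [← hqd] at hs hb
    omega
  have hcard : Sm.card ≤ 2 := by
    rw [← Finset.card_image_of_injOn hinj]
    apply three_ext h.two h.hq (h.cap.rs X) hX (fun P hP => (mem_res.mp hP).2) hXc
    intro N hN
    obtain ⟨S, hS, rfl⟩ := Finset.mem_image.mp hN
    obtain ⟨a1, a2, a3, a4, a5⟩ := hf S hS
    exact ⟨a1, a2, fun h' => a3 (mem_res.mp h').1, a4⟩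
  have hsum := cov_sum h.cap.pt (le_top (a := X))
  rw [res_top, hXc, card_cov_two le_top (by rw [h.rkV, hX]), ← hqd] at hsum
  have hub : ∑ S ∈ cov X ⊤, (res K S).card ≤ ∑ S ∈ cov X ⊤,
      ((q ^ 2 - q + 2) + if q ^ 2 + 3 ≤ (res K S).card + q then q - 1 else 0) := by
    refine Finset.sum_le_sum fun S hS => ?_
    obtain ⟨s1, s2, s3⟩ := mem_cov.mp hS
    have := solid_le h.two h.hq h.cap (by omega : rk S = 4)
    rw [← hqd] at this
    have hqq : q ≤ q ^ 2 := by nlinarith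
    split_ifs with hc <;> omega
  rw [Finset.sum_add_distrib, Finset.sum_const, ← Finset.sum_filter, Finset.sum_const,
    card_cov_two le_top (by rw [h.rkV, hX]), ← hqd] at hub
  change _ ≤ _ + Sm.card • (q - 1) at hub
  simp only [smul_eq_mul] at hub
  have h5 : Sm.card * (q - 1) ≤ 2 * (q - 1) := Nat.mul_le_mul_right _ hcard
  have hb := h.big
  rw [← hqd] at hb
  obtain ⟨p, hp⟩ : ∃ p, q = p + 1 := ⟨q - 1, by omega⟩
  have e1 : q ^ 2 - q = p * q := by rw [hp]; rw [sq, ← Nat.sub_one_mul]; rfl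
  rw [e1] at hub
  rw [hp, Nat.add_sub_cancel] at h5 hub
  rw [hp] at hsum hb
  nlinarith

theorem Big.small {K : Finset (Submodule F V)} (h : Big K) {S : Submodule F V} (hS : rk S = 4)
    (hSk : Fintype.card F ^ 2 + 3 ≤ (res K S).card + Fintype.card F) :
    MaxIn (res K S) S ∧ (res K S).card = Fintype.card F ^ 2 + 1 ∧
    ∀ X ≤ S, rk X = 3 → 2 ≤ (res K X).card → (res K X).card = Fintype.card F + 1 := by
  have hq := h.hq
  obtain ⟨O, hO, hKO, hOS, hmax⟩ := exists_max (h.cap.rs S) (W := S)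
    (fun P hP => (mem_res.mp hP).2)
  have hcle := Finset.card_le_card hKO
  obtain ⟨hO1, hO2⟩ := threeD h.two h.hq hO hS hOS hmax (by omega)
  by_cases heq : res K S = O
  · rw [heq]
    refine ⟨hmax, hO1, fun X hXS hX3 hX2 => ?_⟩
    rw [← res_res hXS, heq] at hX2 ⊢
    exact hO2 X hXS hX3 hX2
  · exfalso
    obtain ⟨N, hNO, hNK⟩ := Finset.exists_of_ssubset (Finset.ssubset_iff_subset_ne.mpr ⟨hKO, heq⟩)
    have hqq : Fintype.card F ≤ Fintype.card F ^ 2 := by nlinarith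
    obtain ⟨A, hA⟩ := Finset.card_pos.mp (by omega : 0 < (res K S).card)
    have hAN : A ≠ N := fun e => hNK (e ▸ hA)
    have hA1 := hO.pt A (hKO hA)
    have hN1 := hO.pt N hNO
    have hr : A ⊔ N ≤ S := sup_le (hOS A (hKO hA)) (hOS N hNO)
    set M := (O \ res K S).erase N with hM
    have hMc : M.card + 3 ≤ Fintype.card F := by
      rw [hM, Finset.card_erase_of_mem (Finset.mem_sdiff.mpr ⟨hNO, hNK⟩),
        Finset.card_sdiff_of_subset hKO]
      omega
    have hcov : (cov (A ⊔ N) S).card = Fintype.card F + 1 :=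
      card_cov_two hr (by rw [hS, rk_line hA1 hN1 hAN])
    obtain ⟨X, hX, hXM⟩ : ∃ X ∈ cov (A ⊔ N) S, X ∉ M.image (fun R => A ⊔ N ⊔ R) := by
      by_contra hc
      push Not at hc
      have h1 := Finset.card_le_card (show cov (A ⊔ N) S ⊆ _ from hc)
      have h3 := Finset.card_image_le (s := M) (f := fun R => A ⊔ N ⊔ R)
      omega
    obtain ⟨x1, x2, x3⟩ := mem_cov.mp hX
    rw [rk_line hA1 hN1 hAN] at x3
    have hNX : N ≤ X := le_sup_right.trans x1
    have hAX : A ≤ X := le_sup_left.trans x1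
    have hOX := hO2 X x2 x3 (by
      have : ({A, N} : Finset _) ⊆ res O X := by
        intro R hR
        rcases Finset.mem_insert.mp hR with rfl | hR
        · exact mem_res.mpr ⟨hKO hA, hAX⟩
        · rw [Finset.mem_singleton.mp hR]; exact mem_res.mpr ⟨hNO, hNX⟩
      have := Finset.card_le_card this
      rwa [Finset.card_pair hAN] at this)
    have hKX : res K X = (res O X).erase N := by
      ext R
      simp only [Finset.mem_erase, mem_res]
      constructor
      · rintro ⟨a, b⟩
        have : R ∈ res K S := mem_res.mpr ⟨a, b.trans x2⟩
        exact ⟨fun e => hNK (e ▸ this), hKO this, b⟩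
      · rintro ⟨a, b, c⟩
        refine ⟨?_, c⟩
        by_contra hRK
        have hRM : R ∈ M := by
          rw [hM, Finset.mem_erase, Finset.mem_sdiff]
          exact ⟨a, b, fun e => hRK (mem_res.mp e).1⟩
        apply hXM
        refine Finset.mem_image.mpr ⟨R, hRM, ?_⟩
        refine sup_eq_of_cov hX (hO.pt R b) ?_ c
        refine hO.cap A (hKO hA) N hNO R b hAN ?_ a.symm
        rintro rfl
        exact hRK (mem_res.mp hA).1
    refine h.no_defect x3 ?_
    rw [hKX, Finset.card_erase_of_mem (mem_res.mpr ⟨hNO, hNX⟩), hOX]; rfl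

end Part8

open Module
set_option linter.unusedSectionVars false

section Part9
open Classical

variable {F V : Type*} [Field F] [Fintype F] [AddCommGroup V] [Module F V] [Finite V]

theorem even_card_of_two (h2 : (2 : F) = 0) : Even (Fintype.card F) := by
  have h : addOrderOf (1 : F) ∣ Fintype.card F := addOrderOf_dvd_card
  have h3 : addOrderOf (1 : F) = 2 := by
    apply addOrderOf_eq_prime
    · rw [← h2]; norm_num
    · exact one_ne_zero
  rw [h3] at h
  exact even_iff_two_dvd.mpr h

/-- solids through r with many points -/
noncomputable def smalls (K : Finset (Submodule F V)) (r : Submodule F V) :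
    Finset (Submodule F V) :=
  Finset.univ.filter (fun S => r ≤ S ∧ rk S = 4 ∧
    Fintype.card F ^ 2 + 3 ≤ (res K S).card + Fintype.card F)

theorem mem_smalls {K : Finset (Submodule F V)} {r S : Submodule F V} :
    S ∈ smalls K r ↔ r ≤ S ∧ rk S = 4 ∧
    Fintype.card F ^ 2 + 3 ≤ (res K S).card + Fintype.card F := by
  simp [smalls]

theorem Big.many_smalls {K : Finset (Submodule F V)} (h : Big K) {A B : Submodule F V}
    (hA : A ∈ K) (hB : B ∈ K) (hAB : A ≠ B) :
    3 * Fintype.card F + 6 ≤ (smalls K (A ⊔ B)).card := by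
  have hq := h.hq
  have hb := h.big
  have hr2 : rk (A ⊔ B) = 2 := rk_line (h.cap.pt A hA) (h.cap.pt B hB) hAB
  have hcr : (cov (A ⊔ B) ⊤).card = Fintype.card F ^ 2 + Fintype.card F + 1 :=
    card_cov_three le_top (by rw [h.rkV, hr2])
  have s1 := cov_sum h.cap.pt (le_top (a := A ⊔ B))
  rw [res_top, card_res_secant h.cap hA hB hAB, hcr] at s1
  have hswap : ∑ X ∈ cov (A ⊔ B) ⊤, ((cov X ⊤).filter (fun S => Fintype.card F ^ 2 + 3 ≤
      (res K S).card + Fintype.card F)).card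
      = (smalls K (A ⊔ B)).card * (Fintype.card F + 1) := by
    have e1 : ∀ X ∈ cov (A ⊔ B) ⊤, (cov X ⊤).filter (fun S => Fintype.card F ^ 2 + 3 ≤
      (res K S).card + Fintype.card F) = (smalls K (A ⊔ B)).filter (fun S => X ≤ S) := by
      intro X hX
      obtain ⟨x1, x2, x3⟩ := mem_cov.mp hX
      ext S
      simp only [Finset.mem_filter, mem_cov, mem_smalls]
      constructor
      · rintro ⟨⟨a, b, c⟩, d⟩
        exact ⟨⟨x1.trans a, by omega, d⟩, a⟩
      · rintro ⟨⟨a, b, c⟩, d⟩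
        exact ⟨⟨d, le_top, by omega⟩, c⟩
    rw [Finset.sum_congr rfl (fun X hX => by rw [e1 X hX])]
    have e2 := Finset.sum_card_bipartiteAbove_eq_sum_card_bipartiteBelow
      (s := cov (A ⊔ B) ⊤) (t := smalls K (A ⊔ B)) (fun X S => X ≤ S)
    simp only [Finset.bipartiteAbove, Finset.bipartiteBelow] at e2
    rw [e2, Finset.sum_congr rfl (g := fun _ => Fintype.card F + 1), Finset.sum_const, smul_eq_mul]
    intro S hS
    obtain ⟨a, b, c⟩ := mem_smalls.mp hS
    rw [← card_cov_two a (by rw [b, hr2])]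
    congr 1
    ext X
    simp only [Finset.mem_filter, mem_cov]
    constructor
    · rintro ⟨⟨a, b, c⟩, d⟩
      exact ⟨a, d, c⟩
    · rintro ⟨a, b, c⟩
      exact ⟨⟨a, le_top, c⟩, b⟩
  have hX : ∀ X ∈ cov (A ⊔ B) ⊤, K.card + Fintype.card F * (res K X).card ≤
      (Fintype.card F + 1) * (Fintype.card F ^ 2 - Fintype.card F + 2) +
      (Fintype.card F - 1) * ((cov X ⊤).filter (fun S => Fintype.card F ^ 2 + 3 ≤
      (res K S).card + Fintype.card F)).card := by
    intro X hX
    obtain ⟨x1, x2, x3⟩ := mem_cov.mp hX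
    have hcX : (cov X ⊤).card = Fintype.card F + 1 := card_cov_two le_top (by rw [h.rkV, x3, hr2])
    have s2 := cov_sum h.cap.pt (le_top (a := X))
    rw [res_top, hcX] at s2
    have hub : ∑ S ∈ cov X ⊤, (res K S).card ≤ ∑ S ∈ cov X ⊤,
        ((Fintype.card F ^ 2 - Fintype.card F + 2) + if Fintype.card F ^ 2 + 3 ≤ (res K S).card +
          Fintype.card F then Fintype.card F - 1 else 0) := by
      refine Finset.sum_le_sum fun S hS => ?_
      obtain ⟨s1, s2, s3⟩ := mem_cov.mp hS
      have := solid_le h.two h.hq h.cap (by omega : rk S = 4)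
      have hqq : Fintype.card F ≤ Fintype.card F ^ 2 := by nlinarith
      split_ifs with hc <;> omega
    rw [Finset.sum_add_distrib, Finset.sum_const, ← Finset.sum_filter, Finset.sum_const, hcX] at hub
    simp only [smul_eq_mul] at hub
    nlinarith
  have hsum := Finset.sum_le_sum hX
  rw [Finset.sum_add_distrib, Finset.sum_const, ← Finset.mul_sum, Finset.sum_add_distrib,
    ← Finset.mul_sum, ← Finset.mul_sum, hswap, Finset.sum_const, hcr] at hsum
  simp only [smul_eq_mul] at hsum
  generalize (smalls K (A ⊔ B)).card = s at *
  generalize ∑ X ∈ cov (A ⊔ B) ⊤, (res K X).card = z at *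
  clear hswap hX
  generalize Fintype.card F = q at *
  obtain ⟨p, hp⟩ : ∃ p, q = p + 1 := ⟨q - 1, by omega⟩
  have e1 : q ^ 2 - q = p * q := by rw [hp]; rw [sq, ← Nat.sub_one_mul]; rfl
  have e2 : q - 1 = p := by omega
  rw [e1, e2] at hsum
  subst hp
  have hz : z = K.card + 2 * (p + 1) ^ 2 + 2 * (p + 1) := by nlinarith
  subst hz
  have h1 : (p + 1 + 1) * ((p + 1 + 1) * K.card + 2 * (p + 1) ^ 2) ≤ (p + 1 + 1) *
     (((p + 1) ^ 2 + (p + 1) + 1) * (p * (p + 1) + 2) + p * s) := by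
    calc _ = _ := by ring
      _ ≤ _ := hsum
      _ = _ := by ring
  have h2 := Nat.le_of_mul_le_mul_left h1 (by omega)
  have h3 := Nat.mul_le_mul_left (p + 1 + 1) hb
  by_contra hlt
  push Not at hlt
  have h4 : p * s ≤ p * (3 * (p + 1) + 5) := Nat.mul_le_mul_left _ (by omega)
  nlinarith

theorem exists_sg_of_odd {K : Finset (Submodule F V)} (hK : SCap K)
    {X N : Submodule F V} (hN : rk N = 1) (hNK : N ∉ K) (hNX : N ≤ X)
    (hodd : ¬ Even (res K X).card) : ∃ P ∈ sg K N, P ≤ X := by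
  by_contra hc
  push Not at hc
  apply hodd
  have s := cov_sum hK.pt hNX
  have h0 : res K N = ∅ := by
    rw [Finset.eq_empty_iff_forall_notMem]
    intro P hP
    obtain ⟨a, b⟩ := mem_res.mp hP
    exact hNK (pt_le_pt (hK.pt P a) hN b ▸ a)
  rw [h0] at s
  simp only [Finset.card_empty, mul_zero, add_zero] at s
  rw [← s]
  apply Finset.even_sum
  intro l hl
  obtain ⟨l1, l2, l3⟩ := mem_cov.mp hl
  rcases (res K l).eq_empty_or_nonempty with h | ⟨P, hP⟩
  · rw [h]; simp
  · obtain ⟨hP, hPl⟩ := mem_res.mp hP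
    have hnot : P ∉ sg K N := fun h => hc P h (hPl.trans l2)
    rw [mem_sg] at hnot
    push Not at hnot
    obtain ⟨R, hR, hne, hle⟩ := hnot hP
    have hPN : P ≠ N := fun e => hNK (e ▸ hP)
    have hl2 : rk l = 2 := by omega
    have e : P ⊔ R = l := pt_sup_eq (hK.pt P hP) (hK.pt R hR) hl2 hPl
      (hle.trans (sup_le hPl l1)) hne.symm
    rw [← e, card_res_secant hK hP hR hne.symm]
    exact even_two

theorem Big.exists_plane {K : Finset (Submodule F V)} (h : Big K) {A B N S : Submodule F V}
    (hA : A ∈ K) (hB : B ∈ K) (hAB : A ≠ B) (hN : rk N = 1) (hNK : N ∉ K) (hNAB : N ≤ A ⊔ B)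
    (hS : S ∈ smalls K (A ⊔ B)) :
    ∃ X, rk X = 3 ∧ N ≤ X ∧ (res K X).card = Fintype.card F + 1 ∧ ¬ OnSec (res K X) N ∧
      (A ⊔ B) ⊔ X = S := by
  have hq := h.hq
  have hr2 : rk (A ⊔ B) = 2 := rk_line (h.cap.pt A hA) (h.cap.pt B hB) hAB
  obtain ⟨s1, s2, s3⟩ := mem_smalls.mp hS
  obtain ⟨_, _, hpl⟩ := h.small s2 s3
  have hcS : (cov (A ⊔ B) S).card = Fintype.card F + 1 := card_cov_two s1 (by rw [s2, hr2])
  obtain ⟨X1, hX1, X2, hX2, hne⟩ := Finset.one_lt_card.mp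
    (by omega : 1 < (cov (A ⊔ B) S).card)
  have key : ∀ X ∈ cov (A ⊔ B) S, ∃ P ∈ sg K N, P ≤ X ∧ ¬ P ≤ A ⊔ B := by
    intro X hX
    obtain ⟨x1, x2, x3⟩ := mem_cov.mp hX
    have hXk := hpl X x2 (by omega) (by
      rw [← card_res_secant h.cap hA hB hAB]
      refine Finset.card_le_card fun R hR => ?_
      obtain ⟨a, b⟩ := mem_res.mp hR
      exact mem_res.mpr ⟨a, b.trans x1⟩)
    obtain ⟨P, hP, hPX⟩ := exists_sg_of_odd h.cap hN hNK (hNAB.trans x1) (by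
      rw [hXk]
      have := even_card_of_two h.two
      rw [Nat.even_add_one]; exact not_not.mpr this)
    refine ⟨P, hP, hPX, fun hle => ?_⟩
    have := sg_res_secant h.cap hA hB hAB hN hNK hNAB
    rw [Finset.eq_empty_iff_forall_notMem] at this
    exact this P (mem_res.mpr ⟨hP, hle⟩)
  obtain ⟨P1, hP1, hPX1, hPr1⟩ := key X1 hX1
  obtain ⟨P2, hP2, hPX2, hPr2⟩ := key X2 hX2
  have hP1K := sg_sub K N hP1
  have hP2K := sg_sub K N hP2
  have hp1 := h.cap.pt P1 hP1K
  have hp2 := h.cap.pt P2 hP2K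
  obtain ⟨x1, x2, x3⟩ := mem_cov.mp hX1
  obtain ⟨y1, y2, y3⟩ := mem_cov.mp hX2
  have hP2X1 : ¬ P2 ≤ X1 := fun hle =>
    hne ((sup_eq_of_cov hX1 hp2 hPr2 hle).symm.trans (sup_eq_of_cov hX2 hp2 hPr2 hPX2))
  have hNP : N ≠ P1 := fun e => hNK (e ▸ hP1K)
  have hrk : rk (N ⊔ P1 ⊔ P2) = 3 := by
    rw [rk_sup_pt hp2, rk_line hN hp1 hNP]
    exact fun hle => hP2X1 (hle.trans (sup_le (hNAB.trans x1) hPX1))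
  have hXS : N ⊔ P1 ⊔ P2 ≤ S :=
    sup_le (sup_le (hNAB.trans s1) (hPX1.trans x2)) (hPX2.trans y2)
  have hP12 : P1 ≠ P2 := fun e => hP2X1 (e ▸ hPX1)
  have hl1 : P1 ≤ N ⊔ P1 ⊔ P2 := le_sup_right.trans le_sup_left
  have hNX : N ≤ N ⊔ P1 ⊔ P2 := le_sup_left.trans le_sup_left
  have hsg2 : 2 ≤ (res (sg K N) (N ⊔ P1 ⊔ P2)).card := by
    rw [← Finset.card_pair hP12]
    refine Finset.card_le_card fun R hR => ?_
    rcases Finset.mem_insert.mp hR with rfl | hR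
    · exact mem_res.mpr ⟨hP1, hl1⟩
    · rw [Finset.mem_singleton.mp hR]; exact mem_res.mpr ⟨hP2, le_sup_right⟩
  have hk2 : (res (sg K N) (N ⊔ P1 ⊔ P2)).card ≤ (res K (N ⊔ P1 ⊔ P2)).card :=
    Finset.card_le_card (Finset.filter_subset_filter _ (sg_sub K N))
  have hk := hpl _ hXS hrk (by omega)
  have hns : ¬ OnSec (res K (N ⊔ P1 ⊔ P2)) N := by
    intro hsec
    have := plane_lemma' h.two hrk h.cap hN hNK hsec
    omega
  refine ⟨N ⊔ P1 ⊔ P2, hrk, hNX, hk, hns, ?_⟩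
  apply eq_of_le_rk (sup_le s1 hXS)
  by_contra hlt
  have hge : rk (N ⊔ P1 ⊔ P2) ≤ rk ((A ⊔ B) ⊔ (N ⊔ P1 ⊔ P2)) := rk_mono le_sup_right
  have e : N ⊔ P1 ⊔ P2 = (A ⊔ B) ⊔ (N ⊔ P1 ⊔ P2) := eq_of_le_rk le_sup_right (by omega)
  apply hns
  exact onSec_res hA hB hAB hNAB (by rw [e]; exact le_sup_left)

/-- solids through N in which N extends the (large) section -/
noncomputable def bads (K : Finset (Submodule F V)) (N : Submodule F V) :
    Finset (Submodule F V) :=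
  Finset.univ.filter (fun Y => N ≤ Y ∧ rk Y = 4 ∧ ¬ OnSec (res K Y) N ∧
    Fintype.card F ^ 2 + Fintype.card F + 2 < 2 * (res K Y).card)

theorem mem_bads {K : Finset (Submodule F V)} {N Y : Submodule F V} :
    Y ∈ bads K N ↔ N ≤ Y ∧ rk Y = 4 ∧ ¬ OnSec (res K Y) N ∧
    Fintype.card F ^ 2 + Fintype.card F + 2 < 2 * (res K Y).card := by
  simp [bads]

theorem union_bound {α β : Type*} [DecidableEq α] [DecidableEq β] (f : α → Finset β) (c : ℕ)
    (T : Finset α)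
    (hT : ∀ x ∈ T, ∀ y ∈ T, x ≠ y → (f x ∩ f y).card ≤ c) :
    2 * ∑ x ∈ T, (f x).card + T.card * c ≤ 2 * (T.biUnion f).card + T.card ^ 2 * c := by
  induction T using Finset.induction_on with
  | empty => simp
  | insert a T ha ih =>
    have ih := ih (fun x hx y hy => hT x (Finset.mem_insert_of_mem hx) y (Finset.mem_insert_of_mem hy))
    rw [Finset.sum_insert ha, Finset.biUnion_insert, Finset.card_insert_of_notMem ha]
    have h1 := Finset.card_union_add_card_inter (f a) (T.biUnion f)
    have h2 : (f a ∩ T.biUnion f).card ≤ T.card * c := by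
      rw [Finset.inter_biUnion]
      refine Finset.card_biUnion_le_card_mul _ _ _ fun x hx => ?_
      exact hT a (Finset.mem_insert_self _ _) x (Finset.mem_insert_of_mem hx)
        (fun e => ha (e ▸ hx))
    nlinarith

theorem not_sec_sub {K : Finset (Submodule F V)} (hK : SCap K) {N Y : Submodule F V}
    (hN : rk N = 1) (hNK : N ∉ K) (hNY : N ≤ Y) (hs : ¬ OnSec (res K Y) N) :
    res (sg K N) Y = res K Y := by
  rw [← sg_res hNY]
  exact sg_eq_of_not_onSec (hK.rs Y) hN (fun h => hNK (mem_res.mp h).1) hs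

theorem Big.bads_le {K : Finset (Submodule F V)} (h : Big K) {N : Submodule F V}
    (hN : rk N = 1) (hNK : N ∉ K) : (bads K N).card ≤ 4 := by
  by_contra hlt
  obtain ⟨T, hT, hT5⟩ := Finset.exists_subset_card_eq (by omega : 5 ≤ (bads K N).card)
  have hq := h.hq
  have hb := h.big
  have hsig := h.sig hN hNK
  have h1 := union_bound (fun Y => res K Y) (Fintype.card F + 2) T (by
    intro Y hY Z hZ hne
    obtain ⟨_, a, _, _⟩ := mem_bads.mp (hT hY)
    obtain ⟨_, b, _, _⟩ := mem_bads.mp (hT hZ)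
    rw [res_inter]
    apply arc_le h.cap
    have e := rk_sup_inf Y Z
    have h5 : rk (Y ⊔ Z) ≤ 5 := h.rkV ▸ rk_mono le_top
    have h3 : rk (Y ⊓ Z) ≠ 4 := by
      intro h
      apply hne
      have e1 : Y ⊓ Z = Y := eq_of_le_rk inf_le_left (by omega)
      have e2 : Y ⊓ Z = Z := eq_of_le_rk inf_le_right (by omega)
      exact e1.symm.trans e2
    have h4 : rk (Y ⊓ Z) ≤ rk Y := rk_mono inf_le_left
    omega)
  have h2 : (T.biUnion (fun Y => res K Y)).card ≤ (sg K N).card := by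
    refine Finset.card_le_card (Finset.biUnion_subset.mpr fun Y hY => ?_)
    obtain ⟨a, _, b, _⟩ := mem_bads.mp (hT hY)
    rw [← not_sec_sub h.cap hN hNK a b]
    exact res_sub _ _
  have h3 : ∑ Y ∈ T, (Fintype.card F ^ 2 + Fintype.card F + 3) ≤ ∑ Y ∈ T, 2 * (res K Y).card := by
    refine Finset.sum_le_sum fun Y hY => ?_
    obtain ⟨_, _, _, b⟩ := mem_bads.mp (hT hY)
    omega
  rw [Finset.sum_const, ← Finset.mul_sum, hT5, smul_eq_mul] at h3
  rw [hT5] at h1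
  nlinarith

theorem Big.one_plane {K : Finset (Submodule F V)} (h : Big K) {N X : Submodule F V}
    (hN : rk N = 1) (hNK : N ∉ K) (hX : rk X = 3) (hNX : N ≤ X)
    (hk : (res K X).card = Fintype.card F + 1) (hs : ¬ OnSec (res K X) N)
    (hb : ((cov X ⊤).filter (fun Y => Y ∈ bads K N)).card ≤ 1) :
    (sg K N).card + K.card + 3 * Fintype.card F ≤
      Fintype.card F ^ 3 + Fintype.card F ^ 2 + Fintype.card F + 4 := by
  have hq := h.hq
  have s1 := cov_sum h.cap.pt (le_top (a := X))
  have s2 := cov_sum (K := sg K N) (fun P hP => h.cap.pt P (sg_sub K N hP)) (le_top (a := X))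
  have hc : (cov X ⊤).card = Fintype.card F + 1 := card_cov_two le_top (by rw [h.rkV, hX])
  rw [not_sec_sub h.cap hN hNK hNX hs, res_top, hc, hk] at s2
  rw [res_top, hc, hk] at s1
  have hub : ∑ Y ∈ cov X ⊤, ((res K Y).card + (res (sg K N) Y).card) ≤
      ∑ Y ∈ cov X ⊤, ((Fintype.card F ^ 2 + Fintype.card F + 2) +
        if Y ∈ bads K N then Fintype.card F ^ 2 + 2 - 3 * Fintype.card F else 0) := by
    refine Finset.sum_le_sum fun Y hY => ?_
    obtain ⟨y1, y2, y3⟩ := mem_cov.mp hY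
    have hY4 : rk Y = 4 := by omega
    by_cases hsec : OnSec (res K Y) N
    · have := L2four h.two h.cap hY4 hN hNK hsec
      omega
    · rw [not_sec_sub h.cap hN hNK (hNX.trans y1) hsec]
      split_ifs with hbd
      · have : ¬ (Fintype.card F ^ 2 + 3 ≤ (res K Y).card + Fintype.card F) := by
          intro hsm
          exact hsec ((h.small hY4 hsm).1 N hN (hNX.trans y1) (fun h' => hNK (mem_res.mp h').1))
        have h3 : 3 * Fintype.card F ≤ Fintype.card F ^ 2 := by nlinarith
        omega
      · have : ¬ (Fintype.card F ^ 2 + Fintype.card F + 2 < 2 * (res K Y).card) := fun hh =>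
          hbd (mem_bads.mpr ⟨hNX.trans y1, hY4, hsec, hh⟩)
        omega
  rw [Finset.sum_add_distrib, Finset.sum_add_distrib, ← Finset.sum_filter, Finset.sum_const,
    Finset.sum_const, hc, smul_eq_mul, smul_eq_mul] at hub
  have h3 : 3 * Fintype.card F ≤ Fintype.card F ^ 2 := by nlinarith
  have h4 := Nat.mul_le_mul_right (Fintype.card F ^ 2 + 2 - 3 * Fintype.card F) hb
  rw [one_mul] at h4
  have h5 : Fintype.card F ^ 2 + 2 - 3 * Fintype.card F + 3 * Fintype.card F
    = Fintype.card F ^ 2 + 2 := by omega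
  nlinarith

theorem Big.sig_le {K : Finset (Submodule F V)} (h : Big K) {N : Submodule F V}
    (hN : rk N = 1) (hNK : N ∉ K) :
    (sg K N).card + K.card + 3 * Fintype.card F ≤
      Fintype.card F ^ 3 + Fintype.card F ^ 2 + Fintype.card F + 4 := by
  by_contra hcon
  obtain ⟨A, hA, B, hB, hAB, hle⟩ := h.mx N hN le_top hNK
  have hq := h.hq
  have h1 := h.many_smalls hA hB hAB
  have h2 : smalls K (A ⊔ B) ⊆ (bads K N ×ˢ bads K N).image (fun p => (A ⊔ B) ⊔ (p.1 ⊓ p.2)) := by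
    intro S hS
    obtain ⟨X, x1, x2, x3, x4, x5⟩ := h.exists_plane hA hB hAB hN hNK hle hS
    have : ¬ ((cov X ⊤).filter (fun Y => Y ∈ bads K N)).card ≤ 1 := fun hb =>
      hcon (h.one_plane hN hNK x1 x2 x3 x4 hb)
    obtain ⟨Y, hY, Z, hZ, hne⟩ := Finset.one_lt_card.mp (not_le.mp this)
    obtain ⟨hY, hYb⟩ := Finset.mem_filter.mp hY
    obtain ⟨hZ, hZb⟩ := Finset.mem_filter.mp hZ
    obtain ⟨a1, a2, a3⟩ := mem_cov.mp hY
    obtain ⟨b1, b2, b3⟩ := mem_cov.mp hZ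
    refine Finset.mem_image.mpr ⟨(Y, Z), Finset.mem_product.mpr ⟨hYb, hZb⟩, ?_⟩
    simp only
    rw [inf_solids (by omega) (by omega) x1 a1 b1 hne, x5]
  have h3 := (Finset.card_le_card h2).trans Finset.card_image_le
  rw [Finset.card_product] at h3
  have h4 := Nat.mul_le_mul (h.bads_le hN hNK) (h.bads_le hN hNK)
  omega

theorem Big.false {K : Finset (Submodule F V)} (h : Big K) : False := by
  have hq := h.hq
  have hb := h.big
  have hbot : rk (⊥ : Submodule F V) = 0 := by simp
  have hpts : (cov (⊥ : Submodule F V) ⊤).card = Fintype.card F ^ 4 + Fintype.card F ^ 3 +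
      Fintype.card F ^ 2 + Fintype.card F + 1 := card_cov_five le_top (by rw [h.rkV, hbot])
  set NK := (cov (⊥ : Submodule F V) ⊤) \ K with hNK
  have hKsub : K ⊆ cov (⊥ : Submodule F V) ⊤ := fun P hP => cov_bot_mem.mpr ⟨le_top, h.cap.pt P hP⟩
  have hNKc : NK.card + K.card = Fintype.card F ^ 4 + Fintype.card F ^ 3 +
      Fintype.card F ^ 2 + Fintype.card F + 1 := by
    rw [hNK, Finset.card_sdiff_add_card_eq_card hKsub, hpts]
  obtain ⟨P0, hP0⟩ := Finset.card_pos.mp (show 0 < K.card by nlinarith)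
  have htan : ∀ P ∈ K, (tang K P ⊤).card + K.card =
      Fintype.card F ^ 3 + Fintype.card F ^ 2 + Fintype.card F + 2 := by
    intro P hP
    have := tang_count h.cap hP le_top
    rw [res_top, card_cov_four le_top (by rw [h.rkV, h.cap.pt P hP])] at this
    exact this
  set t := (tang K P0 ⊤).card with ht
  have ht0 := htan P0 hP0
  rw [← ht] at ht0
  have e2 := Finset.sum_card_bipartiteAbove_eq_sum_card_bipartiteBelow
      (s := NK) (t := K) (fun N P => P ∈ sg K N)
  have e3 : ∀ N ∈ NK, (Finset.bipartiteAbove (fun N P => P ∈ sg K N) K N).card + 3 * Fintype.card F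
      ≤ t + 2 := by
    intro N hN
    obtain ⟨a, b⟩ := Finset.mem_sdiff.mp hN
    have hs := h.sig_le (cov_bot_mem.mp a).2 b
    have : (Finset.bipartiteAbove (fun N P => P ∈ sg K N) K N).card ≤ (sg K N).card := by
      refine Finset.card_le_card fun P hP => ?_
      exact (Finset.mem_filter.mp hP).2
    omega
  have e4 : ∀ P ∈ K, t * Fintype.card F ≤
      (Finset.bipartiteBelow (fun N P => P ∈ sg K N) NK P).card := by
    intro P hP
    have hP1 := h.cap.pt P hP
    have htP : (tang K P ⊤).card = t := by have := htan P hP; omega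
    rw [Finset.card_eq_sum_card_fiberwise (f := fun N => P ⊔ N) (t := tang K P ⊤), ← htP,
      ← smul_eq_mul, ← Finset.sum_const]
    · refine Finset.sum_le_sum fun l hl => ?_
      obtain ⟨⟨l1, l2, l3⟩, l4⟩ := mem_tang.mp hl
      have hl2 : rk l = 2 := by omega
      have hcl : (cov ⊥ l).card = Fintype.card F + 1 := card_cov_two bot_le (by rw [hbot, hl2])
      have : ((cov ⊥ l).erase P).card = Fintype.card F := by
        rw [Finset.card_erase_of_mem (cov_bot_mem.mpr ⟨l1, hP1⟩), hcl]; rfl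
      rw [← this]
      refine Finset.card_le_card fun N hN => ?_
      obtain ⟨n1, n2⟩ := Finset.mem_erase.mp hN
      obtain ⟨n2, n3⟩ := cov_bot_mem.mp n2
      have e : P ⊔ N = l := pt_sup_eq hP1 n3 hl2 l1 n2 n1.symm
      have hNK' : N ∉ K := fun hNK => by
        have : N ∈ res K l := mem_res.mpr ⟨hNK, n2⟩
        rw [l4] at this
        exact n1 (Finset.mem_singleton.mp this)
      refine Finset.mem_filter.mpr ⟨Finset.mem_filter.mpr
        ⟨Finset.mem_sdiff.mpr ⟨cov_bot_mem.mpr ⟨le_top, n3⟩, hNK'⟩, mem_sg.mpr ⟨hP, ?_⟩⟩, e⟩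
      intro R hR hne hle
      rw [e] at hle
      have : R ∈ res K l := mem_res.mpr ⟨hR, hle⟩
      rw [l4] at this
      exact hne (Finset.mem_singleton.mp this)
    · intro N hN
      obtain ⟨n1, n2⟩ := Finset.mem_filter.mp hN
      obtain ⟨n3, n4⟩ := Finset.mem_sdiff.mp n1
      have hN1 := (cov_bot_mem.mp n3).2
      have hPN : P ≠ N := fun e => n4 (e ▸ hP)
      refine mem_tang.mpr ⟨⟨le_sup_left, le_top, by rw [rk_line hP1 hN1 hPN, hP1]⟩, ?_⟩
      rw [Finset.eq_singleton_iff_unique_mem]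
      refine ⟨mem_res.mpr ⟨hP, le_sup_left⟩, fun R hR => ?_⟩
      obtain ⟨hRK, hRle⟩ := mem_res.mp hR
      by_contra hne
      exact (mem_sg.mp n2).2 R hRK hne hRle
  have f1 := Finset.sum_le_sum e3
  have f2 := Finset.sum_le_sum e4
  rw [Finset.sum_add_distrib, Finset.sum_const, Finset.sum_const, smul_eq_mul, smul_eq_mul, e2] at f1
  rw [Finset.sum_const, smul_eq_mul] at f2
  have hfin : K.card * (t * Fintype.card F) + NK.card * (3 * Fintype.card F) ≤ NK.card * (t + 2) := by
    omega
  clear f1 f2 e2 e3 e4 htan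
  clear_value t NK
  generalize Fintype.card F = q at *
  generalize K.card = k at *
  generalize NK.card = n at *
  clear ht hKsub hpts
  have hq' : (16 : ℤ) ≤ q := by exact_mod_cast hq
  have hb' : (q : ℤ) ^ 3 + 4 * q ≤ k + q ^ 2 := by exact_mod_cast hb
  have ht' : (t : ℤ) + k = q ^ 3 + q ^ 2 + q + 2 := by exact_mod_cast ht0
  have hn' : (n : ℤ) + k = q ^ 4 + q ^ 3 + q ^ 2 + q + 1 := by exact_mod_cast hNKc
  have hf' : (k : ℤ) * (t * q) + n * (3 * q) ≤ n * (t + 2) := by exact_mod_cast hfin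
  have htn : (0 : ℤ) ≤ t := by positivity
  generalize (q : ℤ) = q at *
  generalize (t : ℤ) = t at *
  have ek : (k : ℤ) = q ^ 3 + q ^ 2 + q + 2 - t := by linarith
  have en : (n : ℤ) = q ^ 4 - 1 + t := by linarith
  rw [ek] at hb'
  rw [ek, en] at hf'
  have h1 : t ≤ 2 * q ^ 2 - 3 * q + 2 := by linarith
  have h2 : (q + 1) * t ≤ (q + 1) * (2 * q ^ 2 - 3 * q + 2) :=
    mul_le_mul_of_nonneg_left h1 (by linarith)
  have hg : 0 ≤ q ^ 3 - 2 * q ^ 2 - 6 * q + 3 := by nlinarith [mul_nonneg (by linarith : 0 ≤ q - 16) (sq_nonneg q)]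
  have h3 : t * (-(q ^ 3 - 2 * q ^ 2 - 6 * q + 3)) ≤ t * (q ^ 3 + q ^ 2 + 5 * q - 1 - (q + 1) * t) :=
    mul_le_mul_of_nonneg_left (by linarith) htn
  have h4 : t * (q ^ 3 - 2 * q ^ 2 - 6 * q + 3) ≤
    (2 * q ^ 2 - 3 * q + 2) * (q ^ 3 - 2 * q ^ 2 - 6 * q + 3) := mul_le_mul_of_nonneg_right h1 hg
  have h5 : t * (q ^ 3 + q ^ 2 + 5 * q - 1 - (q + 1) * t) + 3 * q ^ 5 - 2 * q ^ 4 - 3 * q + 2 ≤ 0 := by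
    linarith
  have h6 : (2 * q ^ 2 - 3 * q + 2) * (q ^ 3 - 2 * q ^ 2 - 6 * q + 3) <
      3 * q ^ 5 - 2 * q ^ 4 - 3 * q + 2 := by
    obtain ⟨m, hm⟩ : ∃ m, q = m + 16 := ⟨q - 16, by ring⟩
    have hm0 : 0 ≤ m := by linarith
    subst hm
    have : 0 < (3 * (m + 16) ^ 5 - 2 * (m + 16) ^ 4 - 3 * (m + 16) + 2) -
      (2 * (m + 16) ^ 2 - 3 * (m + 16) + 2) * ((m + 16) ^ 3 - 2 * (m + 16) ^ 2 - 6 * (m + 16) + 3) := by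
      ring_nf
      positivity
    linarith
  linarith

end Part9

open Classical in
theorem cap_bound (F : Type*) [Field F] [Fintype F] (h2 : (2 : F) = 0) (hq : 16 ≤ Fintype.card F)
    (K : Set (PGPoint F 4)) (hK : IsCap K) :
    K.ncard + Fintype.card F ^ 2 < Fintype.card F ^ 3 + 4 * Fintype.card F := by
  have hinj : Function.Injective
    (Projectivization.submodule : PGPoint F 4 → Submodule F (Fin (4 + 1) → F)) :=
    Projectivization.submodule_injective
  haveI : Finite (PGPoint F 4) := Finite.of_injective _ hinj
  have hfin : (Projectivization.submodule '' K).Finite := Set.toFinite _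
  have hcard : hfin.toFinset.card = K.ncard := by
    rw [← Set.ncard_eq_toFinset_card _ hfin, Set.ncard_image_of_injective _ hinj]
  have hpt : ∀ P : PGPoint F 4, rk P.submodule = 1 := fun P => Projectivization.finrank_submodule P
  have hcap : SCap hfin.toFinset := by
    refine ⟨?_, ?_⟩
    · intro P hP
      obtain ⟨p, hp, rfl⟩ := (Set.Finite.mem_toFinset hfin).mp hP
      exact hpt p
    · intro A hA B hB C hC hAB hAC hBC hle
      obtain ⟨a, ha, rfl⟩ := (Set.Finite.mem_toFinset hfin).mp hA
      obtain ⟨b, hb, rfl⟩ := (Set.Finite.mem_toFinset hfin).mp hB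
      obtain ⟨c, hc, rfl⟩ := (Set.Finite.mem_toFinset hfin).mp hC
      refine hK a ha b hb c hc (fun e => hAB (e ▸ rfl)) (fun e => hAC (e ▸ rfl))
        (fun e => hBC (e ▸ rfl)) ?_
      unfold Coll3
      rw [sup_eq_left.mpr hle]
      exact (rk_line (hpt a) (hpt b) hAB).le
  obtain ⟨L, hL, hKL, _, hmax⟩ := exists_max hcap (W := ⊤) (fun _ _ => le_top)
  have hle := Finset.card_le_card hKL
  rw [hcard] at hle
  by_contra hlt
  push Not at hlt
  have hB : Big L := ⟨h2, hq, by simp [rk], hL, hmax, by omega⟩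
  exact hB.false

theorem stmt10 (F : Type*) [Field F] [Fintype F] (q : ℕ) (hcard : Fintype.card F = q)
    (hqeven : Even q) (hq : 8 < q)
    (K : Set (PGPoint F 4)) (hK : IsCap K) :
    (K.ncard : ℝ) < (q : ℝ) ^ 3 - (q : ℝ) ^ 2 + 2 * Real.sqrt 5 * (q : ℝ) - 8 := by
  obtain ⟨p, hchar⟩ := CharP.exists F
  obtain ⟨n, hp, hn⟩ := FiniteField.card F p
  rw [hcard] at hn
  have hp2 : p = 2 := by
    have h2 : 2 ∣ p ^ (n : ℕ) := hn ▸ even_iff_two_dvd.mp hqeven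
    exact ((Nat.prime_dvd_prime_iff_eq Nat.prime_two hp).mp (Nat.prime_two.dvd_of_dvd_pow h2)).symm
  subst hp2
  have h2 : (2 : F) = 0 := by exact_mod_cast CharP.cast_eq_zero F 2
  have hn4 : 3 < (n : ℕ) := by
    rw [hn] at hq
    exact (Nat.pow_lt_pow_iff_right (by norm_num : 1 < 2)).mp (by simpa using hq)
  have hq16 : 16 ≤ q := by
    rw [hn]
    calc 16 = 2 ^ 4 := by norm_num
      _ ≤ 2 ^ (n : ℕ) := Nat.pow_le_pow_right (by norm_num) hn4
  have hb := cap_bound F h2 (by rw [hcard]; exact hq16) K hK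
  rw [hcard] at hb
  have hb' : (K.ncard : ℝ) + (q : ℝ) ^ 2 + 1 ≤ (q : ℝ) ^ 3 + 4 * q := by exact_mod_cast hb
  have hq' : (16 : ℝ) ≤ q := by exact_mod_cast hq16
  have hs : (2.23 : ℝ) ≤ Real.sqrt 5 := Real.le_sqrt_of_sq_le (by norm_num)
  nlinarith
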